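/- Let G be a proper circular-arc graph and H any finite simple graph such that the closed neighborhood hypergraphs N[G] and N[H] are isomorphic as hypergraphs with multiplicities — that is, there are bijections φ, ψ : V(G) → V(H) with φ(N_G[v]) = N_H[ψ(v)] for every v ∈ V(G). Then the graphs G and H are isomorphic. -/

import Mathlib

/-!
Let `M u v` mean that `u` and `v` are distinct and non-adjacent in `G`, and put `τ = φ⁻¹ ∘ ψ`. The
hypothesis says that, pulled back along `ψ`, non-adjacency in `H` is the twisted relation
`M (τ u) v`. So `M` and its twist are both symmetric and irreflexive (`Twist`), and the claim is
that they are isomorphic (`exists_iso`).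

Folding away dominated vertices in a `τ`-invariant way leaves a core `K` in which no vertex
properly dominates another (`exists_core`), with a retraction `r` such that `r v` dominates `v`.
Unrolling the circle turns the arcs into intervals of `ℤ` whose left and right endpoints are in
the same order (`RoundModel`), and non-adjacency means lying strictly between two consecutive
translates. In this model the stiff core is a blow-up of a circulant: its twin classes are indexed
by `ZMod m`, and two of them are related iff their circular distance is at least `c`
(`exists_circEnum`).

If `2 * c = m`, the core is a blown-up perfect matching. Then `M` and its twist have a common proper
2-colouring (`exists_coloring`), and applying `τ` on one colour class is an isomorphism
(`exists_iso_of_coloring`).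

If `2 * c < m`, the circulant is rigid (`circulant_rigid`), so `τ` fixes every twin class of `K`.
This propagates: first `v` and `τ v` have the same neighbours in `K`, then the same neighbours
altogether (`twist_trivial`), so the identity is an isomorphism. In each of the two steps, the
neighbourhoods of `v` and `τ v` have the same size inside every class of vertices with equal
`K`-neighbourhood, so if they differ, they differ in both directions; uncrossing the corresponding
intervals then forces all core neighbours of some core vertex to be twins (or a vertex to be
related to itself), which is impossible when `2 * c < m` (`no_swap_core`, `no_swap`).
-/

open Set

/-- The closed neighborhood of a vertex: the vertex together with its neighbors. -/
def ClosedNbhd {V : Type*} (G : SimpleGraph V) (v : V) : Set V :=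
  {u | u = v ∨ G.Adj u v}

/-- `S` is an interval (order-convex set) with respect to the order relation `r`. -/
def IsIntervalWrt {α : Type*} (r : α → α → Prop) (S : Set α) : Prop :=
  ∀ x y z, r x y → r y z → x ∈ S → z ∈ S → y ∈ S

/-- A family of hyperedges forms an interval hypergraph: some linear order on the
vertices makes every hyperedge an interval (a set of consecutive elements). -/
def IsIntervalHypergraph {α ι : Type*} (H : ι → Set α) : Prop :=
  ∃ r : α → α → Prop, IsLinearOrder α r ∧ ∀ i, IsIntervalWrt r (H i)

/-- `S ⊆ ZMod n` is an arc: a set of (at most `n`) circularly consecutive points. -/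
def IsArc (n : ℕ) (S : Set (ZMod n)) : Prop :=
  ∃ a : ZMod n, ∃ k : ℕ, k ≤ n ∧ S = {x | ∃ i : ℕ, i < k ∧ x = a + (i : ZMod n)}

/-- Arcs `A` and `B` share their start point: some point is a start point of both. -/
def SharesStart (n : ℕ) (A B : Set (ZMod n)) : Prop :=
  ∃ a, a ∈ A ∧ a - 1 ∉ A ∧ a ∈ B ∧ a - 1 ∉ B

/-- Arcs `A` and `B` share their end point: some point is an end point of both. -/
def SharesEnd (n : ℕ) (A B : Set (ZMod n)) : Prop :=
  ∃ a, a ∈ A ∧ a + 1 ∉ A ∧ a ∈ B ∧ a + 1 ∉ B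

/-- `G` is a proper interval graph: it has an intersection model consisting of
nonempty integer intervals that are pairwise incomparable under inclusion. -/
def IsProperIntervalGraph {V : Type*} (G : SimpleGraph V) : Prop :=
  ∃ l : V → Set ℤ,
    (∀ v, ∃ a b : ℤ, a ≤ b ∧ l v = Set.Icc a b) ∧
    (∀ u v, u ≠ v → ¬ l u ⊆ l v) ∧
    (∀ u v, u ≠ v → (G.Adj u v ↔ (l u ∩ l v).Nonempty))

/-- `G` is a circular-arc graph: it has an intersection model consisting of
nonempty arcs of some circle `ZMod n`. -/
def IsCAGraph {V : Type*} (G : SimpleGraph V) : Prop :=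
  ∃ n : ℕ, 0 < n ∧ ∃ l : V → Set (ZMod n),
    Function.Injective l ∧
    (∀ v, (l v).Nonempty ∧ IsArc n (l v)) ∧
    (∀ u v, u ≠ v → (G.Adj u v ↔ (l u ∩ l v).Nonempty))

/-- `G` is a proper circular-arc graph: it has an intersection model consisting of
nonempty arcs of some circle `ZMod n`, pairwise incomparable under inclusion. -/
def IsPCAGraph {V : Type*} (G : SimpleGraph V) : Prop :=
  ∃ n : ℕ, 0 < n ∧ ∃ l : V → Set (ZMod n),
    Function.Injective l ∧
    (∀ v, (l v).Nonempty ∧ IsArc n (l v)) ∧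
    (∀ u v, u ≠ v → ¬ l u ⊆ l v) ∧
    (∀ u v, u ≠ v → (G.Adj u v ↔ (l u ∩ l v).Nonempty))

/-- `G` is bipartite: the vertex set splits into two independent sets. -/
def IsBipartite {V : Type*} (G : SimpleGraph V) : Prop :=
  ∃ U : Set V, (∀ u ∈ U, ∀ v ∈ U, ¬ G.Adj u v) ∧ (∀ u ∉ U, ∀ v ∉ U, ¬ G.Adj u v)

namespace PCARec

/-! ### Twisted relations and their cores -/

/-- `M` is a symmetric irreflexive relation (a graph), and so is the twisted relation
`u, v ↦ M (τ u) v`. Here `M` will be non-adjacency in `G`, and the twisted relation non-adjacency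
in `H` transported to the vertex set of `G`. -/
structure Twist {V : Type*} (M : V → V → Prop) (τ : V ≃ V) : Prop where
  symm : ∀ u v, M u v → M v u
  irrefl : ∀ u, ¬ M u u
  twist : ∀ u v, M (τ u) v ↔ M u (τ v)
  irrefl' : ∀ u, ¬ M (τ u) u

section Abstract

variable {V : Type*} {M : V → V → Prop} {τ : V ≃ V}

theorem Twist.zpow (T : Twist M τ) (j : ℤ) (u v : V) :
    M ((τ ^ j : Equiv.Perm V) u) v ↔ M u ((τ ^ j : Equiv.Perm V) v) := by
  have hinv : ∀ u v, M (τ.symm u) v ↔ M u (τ.symm v) := fun u v => by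
    have := T.twist (τ.symm u) (τ.symm v)
    simpa using this.symm
  induction j generalizing u v with
  | zero => simp
  | succ j ih =>
    have e : ∀ x, ((τ : Equiv.Perm V) ^ ((j : ℤ) + 1)) x = τ (((τ : Equiv.Perm V) ^ (j : ℤ)) x) :=
      fun x => by rw [add_comm, zpow_add, zpow_one]; rfl
    have e' : ∀ x, ((τ : Equiv.Perm V) ^ ((j : ℤ) + 1)) x = ((τ : Equiv.Perm V) ^ (j : ℤ)) (τ x) :=
      fun x => by rw [zpow_add, zpow_one]; rfl
    rw [e u, e' v, T.twist]
    exact ih _ _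
  | pred j ih =>
    have e : ∀ x, ((τ : Equiv.Perm V) ^ (-(j : ℤ) - 1)) x
        = τ.symm (((τ : Equiv.Perm V) ^ (-(j : ℤ))) x) :=
      fun x => by rw [sub_eq_add_neg, add_comm, zpow_add, zpow_neg_one]; rfl
    have e' : ∀ x, ((τ : Equiv.Perm V) ^ (-(j : ℤ) - 1)) x
        = ((τ : Equiv.Perm V) ^ (-(j : ℤ))) (τ.symm x) :=
      fun x => by rw [sub_eq_add_neg, zpow_add, zpow_neg_one]; rfl
    rw [e u, e' v, hinv]
    exact ih _ _

/-- No vertex is related to a vertex of its `τ`-orbit: an exponent `2 i` or `2 i + 1` is split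
evenly between the two sides, which leaves an instance of `irrefl` or `irrefl'`. -/
theorem Twist.not_zpow (T : Twist M τ) (j : ℤ) (u : V) :
    ¬ M ((τ ^ j : Equiv.Perm V) u) u := by
  rcases Int.even_or_odd' j with ⟨i, rfl | rfl⟩
  · rw [two_mul, zpow_add, Equiv.Perm.mul_apply, T.zpow]
    exact T.irrefl _
  · have : ((τ : Equiv.Perm V) ^ (2 * i + 1)) u
        = ((τ : Equiv.Perm V) ^ i) (τ (((τ : Equiv.Perm V) ^ i) u)) := by
      rw [show 2 * i + 1 = i + (1 + i) by ring, zpow_add, zpow_add, zpow_one]; rfl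
    rw [this, T.zpow]
    exact T.irrefl' _

/-- If one 2-colouring is proper for both `M` and the twisted relation, then applying `τ` to one
colour class only is an isomorphism between them. -/
theorem exists_iso_of_coloring (T : Twist M τ) (χ : V → Bool)
    (h1 : ∀ u v, M u v → χ u ≠ χ v) (h2 : ∀ u v, M (τ u) v → χ u ≠ χ v) :
    ∃ f : V ≃ V, ∀ u v, M (τ u) v ↔ M (f u) (f v) := by
  classical
  -- the vertices whose neighbourhood is nonempty and whose colour is `false`
  let S : Set V := {u | χ u = false ∧ ∃ w, M u w}
  have hS : ∀ u, τ u ∈ S ↔ u ∈ S := by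
    intro u
    have hcol : ∀ w, M (τ u) w → χ (τ u) = χ u := by
      intro w hw
      have a := h1 _ _ hw
      have b := h2 _ _ hw
      revert a b; cases χ (τ u) <;> cases χ u <;> cases χ w <;> simp
    constructor
    · rintro ⟨h, w, hw⟩
      exact ⟨by rw [← hcol w hw, h], τ w, (T.twist _ _).1 hw⟩
    · rintro ⟨h, w, hw⟩
      have hw' : M (τ u) (τ.symm w) := by rw [T.twist]; simpa using hw
      exact ⟨by rw [hcol _ hw', h], _, hw'⟩
  let f : V ≃ V := Equiv.ofBijective (fun u => if u ∈ S then τ u else u) (by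
    constructor
    · intro a b hab
      by_cases ha : a ∈ S <;> by_cases hb : b ∈ S <;> simp only [ha, hb, if_true, if_false] at hab
      · exact τ.injective hab
      · exact absurd (hab ▸ (hS a).2 ha) hb
      · exact absurd (hab.symm ▸ (hS b).2 hb) ha
      · exact hab
    · intro b
      by_cases hb : b ∈ S
      · refine ⟨τ.symm b, ?_⟩
        have : τ.symm b ∈ S := by rw [← hS]; simpa using hb
        simp [this]
      · exact ⟨b, by simp [hb]⟩)
  have hf : ∀ u, f u = if u ∈ S then τ u else u := fun u => rfl
  refine ⟨f, fun u v => ?_⟩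
  rw [hf, hf]
  by_cases hu : u ∈ S <;> by_cases hv : v ∈ S <;> simp only [hu, hv, if_true, if_false]
  · constructor
    · intro h; exact absurd (hu.1.trans hv.1.symm) (h2 _ _ h)
    · intro h; exact absurd (((hS u).2 hu).1.trans ((hS v).2 hv).1.symm) (h1 _ _ h)
  · rw [T.twist]
  · constructor
    · intro h
      exfalso
      have h' := (T.twist _ _).1 h
      have hu' : χ u = true := by
        by_contra hc; exact hu ⟨by simpa using hc, _, h'⟩
      have hv' : χ v = true := by
        by_contra hc; exact hv ⟨by simpa using hc, _, T.symm _ _ h⟩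
      exact h2 _ _ h (hu'.trans hv'.symm)
    · intro h
      exfalso
      have hu' : χ u = true := by
        by_contra hc; exact hu ⟨by simpa using hc, _, h⟩
      have hv' : χ v = true := by
        by_contra hc; exact hv ⟨by simpa using hc, _, T.symm _ _ h⟩
      exact h1 _ _ h (hu'.trans hv'.symm)

/-- Within `K`, the neighbourhood of `u` is contained in that of `v`. -/
def Dom (M : V → V → Prop) (K : Set V) (u v : V) : Prop := ∀ w ∈ K, M u w → M v w

/-- `K` is a `τ`-invariant vertex set without isolated vertices, and `r` retracts the non-isolated
vertices homomorphically into `K`, for both `M` and the twisted relation, in such a way that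
`r v` dominates `v` within `K`. -/
structure IsCore (M : V → V → Prop) (τ : V ≃ V) (K : Set V) (r : V → V) : Prop where
  inv : ∀ v, τ v ∈ K ↔ v ∈ K
  nonisol : ∀ v ∈ K, ∃ w ∈ K, M v w
  mem : ∀ v w, M v w → r v ∈ K
  hom : ∀ u v, M u v → M (r u) (r v)
  hom' : ∀ u v, M (τ u) v → M (τ (r u)) (r v)
  dom : ∀ v, Dom M K v (r v)

theorem Dom.tau (T : Twist M τ) {K : Set V} (hK : ∀ v, τ v ∈ K ↔ v ∈ K) {u v : V}
    (h : Dom M K u v) : Dom M K (τ u) (τ v) := fun w hw huw =>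
  (T.twist _ _).2 (h _ ((hK w).2 hw) ((T.twist _ _).1 huw))

theorem Dom.tau_symm (T : Twist M τ) {K : Set V} (hK : ∀ v, τ v ∈ K ↔ v ∈ K) {u v : V}
    (h : Dom M K (τ u) (τ v)) : Dom M K u v := fun w hw huw => by
  have hw' : τ.symm w ∈ K := by rw [← hK]; simpa using hw
  have := h _ hw' (by rw [T.twist]; simpa using huw)
  rw [T.twist] at this
  simpa using this

/-- A core of minimum size is stiff: domination between two of its vertices makes them twins.
Otherwise the vertices that are maximal for domination would form a smaller core. -/
theorem exists_core [Finite V] (T : Twist M τ) :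
    ∃ K r, IsCore M τ K r ∧ ∀ u ∈ K, ∀ v ∈ K, Dom M K u v → Dom M K v u := by
  classical
  let P : ℕ → Prop := fun k => ∃ K : Set V, K.ncard = k ∧ ∃ r, IsCore M τ K r
  have iso : ∀ u, (∃ w, M (τ u) w) ↔ ∃ w, M u w := fun u =>
    ⟨fun ⟨w, hw⟩ => ⟨τ w, (T.twist _ _).1 hw⟩,
      fun ⟨w, hw⟩ => ⟨τ.symm w, by rw [T.twist]; simpa using hw⟩⟩
  have hP : ∃ k, P k := by
    refine ⟨_, {v | ∃ w, M v w}, rfl, id, ?_⟩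
    exact ⟨iso, fun v ⟨w, hw⟩ => ⟨w, ⟨v, T.symm _ _ hw⟩, hw⟩, fun v w h => ⟨w, h⟩,
      fun u v h => h, fun u v h => h, fun v w _ h => h⟩
  obtain ⟨K, hKc, r, hK⟩ := Nat.find_spec hP
  refine ⟨K, r, hK, ?_⟩
  let U : Set V := {u | u ∈ K ∧ ∀ v ∈ K, Dom M K u v → Dom M K v u}
  have hUK : U ⊆ K := fun u h => h.1
  -- every vertex of `K` is dominated by a maximal one
  have hmax : ∀ u ∈ K, ∃ v ∈ U, Dom M K u v := by
    intro u hu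
    let N : V → Set V := fun v => {w | w ∈ K ∧ M v w}
    obtain ⟨v, ⟨hvK, huv⟩, hv⟩ := Set.exists_max_image {v | v ∈ K ∧ Dom M K u v}
      (fun v => (N v).ncard) (Set.toFinite _) ⟨u, hu, fun _ _ h => h⟩
    refine ⟨v, ⟨hvK, fun x hx hvx => ?_⟩, huv⟩
    have hsub : N v ⊆ N x := fun w hw => ⟨hw.1, hvx w hw.1 hw.2⟩
    have heq := Set.eq_of_subset_of_ncard_le hsub
      (hv x ⟨hx, fun w hw h => hvx w hw (huv w hw h)⟩) (Set.toFinite _)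
    intro w hw hxw
    have : w ∈ N v := by rw [heq]; exact ⟨hw, hxw⟩
    exact this.2
  choose! q hqU hq using hmax
  have hU : IsCore M τ U (q ∘ r) := by
    refine ⟨?_, ?_, ?_, ?_, ?_, ?_⟩
    · intro v
      constructor
      · rintro ⟨h, h'⟩
        refine ⟨(hK.inv v).1 h, fun x hx hvx => ?_⟩
        exact (h' _ ((hK.inv x).2 hx) (hvx.tau T hK.inv)).tau_symm T hK.inv
      · rintro ⟨h, h'⟩
        refine ⟨(hK.inv v).2 h, fun x hx hvx => ?_⟩
        obtain ⟨x, rfl⟩ := τ.surjective x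
        exact (h' _ ((hK.inv x).1 hx) (hvx.tau_symm T hK.inv)).tau T hK.inv
    · rintro v hv
      obtain ⟨w, hw, hvw⟩ := hK.nonisol v hv.1
      exact ⟨q w, hqU w hw, T.symm _ _ (hq w hw v hv.1 (T.symm _ _ hvw))⟩
    · intro v w h
      exact hqU _ (hK.mem v w h)
    · intro u v h
      have hu := hK.mem u v h
      have hv := hK.mem v u (T.symm _ _ h)
      have h1 := hq _ hu _ hv (hK.hom u v h)
      exact T.symm _ _ (hq _ hv _ (hUK (hqU _ hu)) (T.symm _ _ h1))
    · intro u v h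
      have hu : r u ∈ K := by
        exact hK.mem u _ ((T.twist _ _).1 h)
      have hv := hK.mem v _ (T.symm _ _ h)
      have h1 := (hq _ hu).tau T hK.inv _ hv (hK.hom' u v h)
      exact T.symm _ _ (hq _ hv _ ((hK.inv _).2 (hUK (hqU _ hu))) (T.symm _ _ h1))
    · intro v w hw h
      have h1 := hK.dom v w (hUK hw) h
      exact hq _ (hK.mem v w h) w (hUK hw) h1
  have hle : K.ncard ≤ U.ncard := by
    have := Nat.find_min' hP ⟨U, rfl, _, hU⟩
    rw [hKc]; exact this
  have : U = K := Set.eq_of_subset_of_ncard_le hUK hle (Set.toFinite _)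
  intro u hu
  rw [← this] at hu
  exact hu.2

/-- If the neighbours of each core vertex are all twins, then the core is a disjoint union of
complete bipartite graphs, and `M` and the twisted relation have a common proper 2-colouring.
Up to `τ`-orbits and twins the core is a perfect matching; one end of each edge gets one colour,
and the colouring is pulled back along `r`. -/
theorem exists_coloring [Finite V] (T : Twist M τ) {K : Set V} {r : V → V}
    (hK : IsCore M τ K r)
    (hL : ∀ u ∈ K, ∀ z ∈ K, ∀ z' ∈ K, M u z → M u z' → Dom M K z z') :
    ∃ χ : V → Bool, (∀ u v, M u v → χ u ≠ χ v) ∧ (∀ u v, M (τ u) v → χ u ≠ χ v) := by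
  classical
  have hpow : ∀ (j : ℤ) v, ((τ ^ j : Equiv.Perm V) v) ∈ K ↔ v ∈ K := by
    intro j v
    induction j with
    | zero => simp
    | succ j ih =>
      rw [add_comm, zpow_add, zpow_one, Equiv.Perm.mul_apply]
      exact (hK.inv _).trans ih
    | pred j ih =>
      rw [sub_eq_add_neg, add_comm, zpow_add, zpow_neg_one, Equiv.Perm.mul_apply, ← ih, ← hK.inv]
      simp
  have hneg : ∀ (j : ℤ) v, (τ ^ j : Equiv.Perm V) ((τ ^ (-j) : Equiv.Perm V) v) = v := by
    intro j v
    rw [← Equiv.Perm.mul_apply, ← zpow_add]; simp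
  let st : Setoid K :=
    { r := fun u v => ∃ j : ℤ, ∀ w ∈ K, M ((τ ^ j : Equiv.Perm V) u) w ↔ M v w
      iseqv := by
        refine ⟨fun u => ⟨0, fun w _ => by simp⟩, ?_, ?_⟩
        · rintro u v ⟨j, hj⟩
          refine ⟨-j, fun w hw => ?_⟩
          rw [T.zpow, ← hj _ ((hpow _ _).2 hw), T.zpow, hneg]
        · rintro u v x ⟨j, hj⟩ ⟨i, hi⟩
          refine ⟨i + j, fun w hw => ?_⟩
          rw [← hi w hw, zpow_add, Equiv.Perm.mul_apply, T.zpow, hj _ ((hpow _ _).2 hw), T.zpow] }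
  obtain ⟨N, ⟨g⟩⟩ := Finite.exists_equiv_fin (Quotient st)
  let c : K → Fin N := fun u => g (Quotient.mk st u)
  have hc : ∀ u v : K, c u = c v ↔ ∃ j : ℤ, ∀ w ∈ K, M ((τ ^ j : Equiv.Perm V) u) w ↔ M v w := by
    intro u v
    simp only [c, g.apply_eq_iff_eq]
    exact Quotient.eq
  have hcτ : ∀ (u : V) (hu : u ∈ K) (hu' : τ u ∈ K), c ⟨u, hu⟩ = c ⟨τ u, hu'⟩ := by
    intro u hu hu'
    rw [hc]; exact ⟨1, fun w _ => by rw [zpow_one]⟩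
  -- adjacent vertices lie in different orbits
  have hne : ∀ u v : K, M u v → c u ≠ c v := by
    intro u v h he
    obtain ⟨j, hj⟩ := (hc u v).1 he
    exact T.not_zpow j u ((hj u u.2).2 (T.symm _ _ h))
  have heq : ∀ u v w : K, M u v → M u w → c v = c w := by
    intro u v w h h'
    rw [hc]
    exact ⟨0, fun x hx => by
      simpa using ⟨hL u u.2 v v.2 w w.2 h h' x hx, hL u u.2 w w.2 v v.2 h' h x hx⟩⟩
  have hnb : ∀ u : K, ∃ v : K, M u v := fun u => by
    obtain ⟨w, hw, h⟩ := hK.nonisol u u.2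
    exact ⟨⟨w, hw⟩, h⟩
  choose f hf using hnb
  let χ : V → Bool := fun v =>
    if hv : r v ∈ K then decide (c ⟨r v, hv⟩ < c (f ⟨r v, hv⟩)) else true
  have key : ∀ u v (hu : r u ∈ K) (hv : r v ∈ K),
      c (f ⟨r u, hu⟩) = c ⟨r v, hv⟩ → c (f ⟨r v, hv⟩) = c ⟨r u, hu⟩ →
      c ⟨r u, hu⟩ ≠ c ⟨r v, hv⟩ → χ u ≠ χ v := by
    intro u v hu hv h1 h2 h3 he
    simp only [χ, hu, hv, dif_pos, h1, h2, decide_eq_decide] at he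
    rcases lt_or_gt_of_ne h3 with h | h
    · exact absurd (he.1 h) h.not_gt
    · exact absurd (he.2 h) h.not_gt
  refine ⟨χ, fun u v h => ?_, fun u v h => ?_⟩
  · have hu := hK.mem u v h
    have hv := hK.mem v u (T.symm _ _ h)
    have hr := hK.hom u v h
    exact key u v hu hv (heq ⟨r u, hu⟩ _ _ (hf _) hr)
      (heq ⟨r v, hv⟩ _ _ (hf _) (T.symm _ _ hr)) (hne ⟨r u, hu⟩ ⟨r v, hv⟩ hr)
  · have hu := hK.mem u _ ((T.twist _ _).1 h)
    have hv := hK.mem v _ (T.symm _ _ h)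
    have hr := hK.hom' u v h
    have hr' := (T.twist _ _).1 hr
    have hu' := (hK.inv _).2 hu
    have hv' := (hK.inv _).2 hv
    refine key u v hu hv ?_ ?_ ?_
    · rw [hcτ _ hv hv']
      exact heq ⟨r u, hu⟩ _ ⟨_, hv'⟩ (hf _) hr'
    · rw [hcτ _ hu hu']
      exact heq ⟨r v, hv⟩ _ ⟨_, hu'⟩ (hf _) (T.symm _ _ hr)
    · rw [hcτ _ hv hv']
      exact hne ⟨r u, hu⟩ ⟨_, hv'⟩ hr'

end Abstract

/-! ### Rigidity of circulants -/

section Circulant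

/-- `z` is at circular distance at least `c` from `0` in `ZMod m`. -/
def Far (m : ℕ) (c : ℤ) (z : ZMod m) : Prop :=
  ∃ x : ℤ, c ≤ x ∧ x ≤ m - c ∧ (x : ZMod m) = z

variable {m : ℕ} {c : ℤ}

theorem intCast_inj_of_lt {a b : ℤ} (h : (a : ZMod m) = (b : ZMod m)) (h1 : a - b < m)
    (h2 : b - a < m) : a = b := by
  rw [ZMod.intCast_eq_intCast_iff_dvd_sub] at h
  have := Int.eq_zero_of_abs_lt_dvd h (by rw [abs_lt]; constructor <;> linarith)
  linarith

theorem far_intCast (hc : 1 ≤ c) {y : ℤ} (h0 : 0 ≤ y) (h1 : y < 2 * m) :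
    Far m c (y : ZMod m) ↔ (c ≤ y ∧ y ≤ m - c) ∨ (m + c ≤ y ∧ y ≤ 2 * m - c) := by
  constructor
  · rintro ⟨x, hx, hx', h⟩
    by_cases hy : y < m
    · have := intCast_inj_of_lt h (by linarith) (by linarith)
      left; omega
    · have h' : ((x : ℤ) : ZMod m) = ((y - m : ℤ) : ZMod m) := by rw [h]; simp
      have := intCast_inj_of_lt h' (by linarith) (by linarith)
      right; omega
  · rintro (⟨h, h'⟩ | ⟨h, h'⟩)
    · exact ⟨y, h, h', rfl⟩
    · exact ⟨y - m, by linarith, by linarith, by simp⟩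

theorem exists_intCast [NeZero m] (z : ZMod m) : ∃ y : ℤ, 0 ≤ y ∧ y < m ∧ (y : ZMod m) = z :=
  ⟨z.val, by positivity, by exact_mod_cast z.val_lt, by simp⟩

/-- Distinct vertices of the circulant have incomparable neighbourhoods. -/
theorem far_inj [NeZero m] (hc : 1 ≤ c) (hm : 2 * c ≤ m) {i j : ZMod m}
    (h : ∀ x, Far m c (x - i) → Far m c (x - j)) : i = j := by
  obtain ⟨y, h0, h1, hy⟩ := exists_intCast (i - j)
  have key : ∀ a : ℤ, c ≤ a → a ≤ m - c →
      (c ≤ a + y ∧ a + y ≤ m - c) ∨ (m + c ≤ a + y ∧ a + y ≤ 2 * m - c) := by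
    intro a ha ha'
    rw [← far_intCast hc (by linarith) (by linarith)]
    have := h (i + a) ⟨a, ha, ha', by ring⟩
    rw [Int.cast_add, hy]
    convert this using 1; ring
  have e : y = 0 := by
    have k1 := key c le_rfl (by linarith)
    have k2 := key (m - c) (by linarith) le_rfl
    have k3 := key (m - y)
    omega
  rw [e] at hy
  exact sub_eq_zero.1 (by rw [← hy]; simp)

/-- If all neighbours of `j` but at most one are neighbours of `i`, then `j` is `i` or next to it. -/
theorem far_near [NeZero m] (hc : 2 ≤ c) (hm : 2 * c < m) {i j w : ZMod m}
    (h : ∀ x, Far m c (x - j) → x = w ∨ Far m c (x - i)) : j = i ∨ j = i + 1 ∨ j = i - 1 := by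
  obtain ⟨y, h0, h1, hy⟩ := exists_intCast (j - i)
  have key : ∀ a b : ℤ, c ≤ a → a < b → b ≤ m - c →
      ((c ≤ a + y ∧ a + y ≤ m - c) ∨ (m + c ≤ a + y ∧ a + y ≤ 2 * m - c)) ∨
      ((c ≤ b + y ∧ b + y ≤ m - c) ∨ (m + c ≤ b + y ∧ b + y ≤ 2 * m - c)) := by
    intro a b ha hab hb
    rw [← far_intCast (by linarith) (by linarith) (by linarith),
      ← far_intCast (by linarith) (by linarith) (by linarith)]
    have e1 : ((a + y : ℤ) : ZMod m) = j + a - i := by rw [Int.cast_add, hy]; ring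
    have e2 : ((b + y : ℤ) : ZMod m) = j + b - i := by rw [Int.cast_add, hy]; ring
    rw [e1, e2]
    rcases h (j + a) ⟨a, ha, by linarith, by ring⟩ with ha' | ha'
    · rcases h (j + b) ⟨b, by linarith, hb, by ring⟩ with hb' | hb'
      · have : ((a : ℤ) : ZMod m) = b := add_left_cancel (ha'.trans hb'.symm)
        have := intCast_inj_of_lt this (by linarith) (by linarith)
        omega
      · exact Or.inr hb'
    · exact Or.inl ha'
  have e : y = 0 ∨ y = 1 ∨ y = m - 1 := by
    have k1 := key c (c + 1) le_rfl (by linarith) (by linarith)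
    have k2 := key (m - c - 1) (m - c) (by linarith) (by linarith) le_rfl
    have k3 := key (m - y) (m - y + 1)
    omega
  have hj : j = i + y := by rw [hy]; ring
  rcases e with rfl | rfl | rfl
  · left; simpa using hj
  · right; left; simpa using hj
  · right; right; rw [hj]; simp; ring

/-- A surjection twisting the circulant into a symmetric irreflexive relation is the identity.
It preserves cyclic nearness, hence is a rotation or a reflection; a nontrivial rotation with the
twist property is by `m / 2` and violates `hirr`, and so does any reflection. -/
theorem circulant_rigid [NeZero m] (hc : 1 ≤ c) (hm : 2 * c < m) (t : ZMod m → ZMod m)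
    (hsurj : Function.Surjective t)
    (htw : ∀ i j, Far m c (j - t i) ↔ Far m c (t j - i))
    (hirr : ∀ i, ¬ Far m c (i - t i)) (i : ZMod m) : t i = i := by
  have hinj : Function.Injective t := Finite.injective_iff_surjective.2 hsurj
  rcases eq_or_lt_of_le hc with rfl | hc2
  · -- every nonzero element is far from `0`
    obtain ⟨y, h0, h1, hy⟩ := exists_intCast (i - t i)
    have h := hirr i
    rw [← hy, far_intCast le_rfl h0 (by linarith)] at h
    have : y = 0 := by omega
    rw [this] at hy
    exact (sub_eq_zero.1 (by rw [← hy]; simp)).symm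
  have hc2' : 2 ≤ c := by omega
  have hne : ∀ k : ℤ, 0 < k → k < m → (k : ZMod m) ≠ 0 := by
    intro k hk hk' h
    have := intCast_inj_of_lt (b := 0) (by simpa using h) (by linarith) (by linarith)
    omega
  have h1ne : (1 : ZMod m) ≠ 0 := by simpa using hne 1 (by norm_num) (by linarith)
  have h2ne : (2 : ZMod m) ≠ 0 := by simpa using hne 2 (by norm_num) (by linarith)
  have hstep : ∀ i, t (i + 1) = t i + 1 ∨ t (i + 1) = t i - 1 := by
    intro i
    obtain ⟨w, hw⟩ := hsurj (i + 1 - c)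
    have := far_near (i := t i) (j := t (i + 1)) (w := w) hc2' hm (by
      intro x hx
      rw [htw] at hx ⊢
      obtain ⟨a, ha, ha', hax⟩ := hx
      rcases eq_or_lt_of_le ha' with rfl | h
      · left
        apply hinj
        rw [hw]
        push_cast at hax
        rw [eq_comm, sub_eq_iff_eq_add] at hax
        rw [hax]; simp; ring
      · right
        refine ⟨a + 1, by linarith, by linarith, ?_⟩
        push_cast; rw [hax]; ring)
    rcases this with h | h
    · exact absurd (hinj h) (by simpa using h1ne)
    · exact h
  -- the sign of the step is constant
  have hsign : ∀ i, t (i + 1) - t i = t (i + 1 + 1) - t (i + 1) := by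
    intro i
    have hne' : t (i + 1 + 1) ≠ t i := fun h => h2ne (by
      have := hinj h
      rw [add_assoc, add_eq_left] at this
      rw [← this]; norm_num)
    rcases hstep i with h | h <;> rcases hstep (i + 1) with h' | h'
    · rw [h', h]; ring
    · exact absurd (by rw [h', h]; ring) hne'
    · exact absurd (by rw [h', h]; ring) hne'
    · rw [h', h]; ring
  have hlin : ∀ k : ℕ, t k = t 0 + k * (t 1 - t 0) ∧ t (k + 1) - t k = t 1 - t 0 := by
    intro k
    induction k with
    | zero => simp
    | succ k ih =>
      have e := hsign (k : ZMod m)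
      push_cast
      refine ⟨?_, by rw [← e, ih.2]⟩
      have : t ((k : ZMod m) + 1) = (t (k + 1) - t k) + t k := by ring
      rw [this, ih.2, ih.1]; ring
  have hlin' : ∀ z : ZMod m, t z = t 0 + z * (t 1 - t 0) := by
    intro z
    have := (hlin z.val).1
    simpa using this
  have h01 : t 1 - t 0 = 1 ∨ t 1 - t 0 = -1 := by
    have := hstep 0
    rw [zero_add] at this
    rcases this with h | h
    · left; rw [h]; ring
    · right; rw [h]; ring
  obtain ⟨y, hy0, hy1, hy⟩ := exists_intCast (t 0)
  rcases h01 with h | h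
  · -- a rotation
    rw [h] at hlin'
    have heq : t 0 = - t 0 := far_inj hc hm.le (by
      intro x hx
      have := (htw 0 x).1 hx
      rw [hlin' x] at this
      convert this using 1; ring)
    have hy2 : ((2 * y : ℤ) : ZMod m) = 0 := by
      push_cast; rw [hy, two_mul]; nth_rw 2 [heq]; ring
    by_cases hy' : y = 0
    · rw [hlin', ← hy, hy']; simp
    · exfalso
      have : ((2 * y : ℤ) : ZMod m) = (m : ℤ) := by rw [hy2]; simp
      have := intCast_inj_of_lt this (by linarith) (by omega)
      apply hirr 0
      rw [zero_sub, ← heq, ← hy]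
      exact ⟨y, by linarith, by linarith, rfl⟩
  · -- a reflection
    exfalso
    rw [h] at hlin'
    have key : ∀ z : ℤ, ¬ (c ≤ 2 * z - y ∧ 2 * z - y ≤ m - c) := by
      rintro z ⟨h1, h2⟩
      apply hirr z
      refine ⟨2 * z - y, h1, h2, ?_⟩
      rw [hlin']; push_cast; rw [hy]; ring
    have := key ((y + c + 1) / 2)
    omega

end Circulant

/-! ### Round models and their lifts to the line -/

/-- A round model of the non-adjacency relation `M` of a proper circular-arc graph. The circle of
circumference `n` is unrolled: `v` is the closed interval `[s v, e v]` of `ℤ` and all its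
translates by multiples of `n`. Properness says that left and right endpoints come in the same
order, and `u`, `v` are related iff some translate of `v` fits strictly between two
consecutive translates of `u`. -/
structure RoundModel {V : Type*} (M : V → V → Prop) where
  /-- circumference -/
  n : ℤ
  /-- left endpoint -/
  s : V → ℤ
  /-- right endpoint -/
  e : V → ℤ
  npos : 0 < n
  le : ∀ v, s v ≤ e v
  mono : ∀ u v k, s u ≤ s v + k * n → e u ≤ e v + k * n
  rel_iff : ∀ u v, M u v ↔ ∃ k : ℤ, e u < s v + k * n ∧ e v + k * n < s u + n

namespace RoundModel

variable {V : Type*} {M : V → V → Prop} (P : RoundModel M)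

/-- Left endpoint of the lift `(v, a)`, the `a`-th translate of the arc `v`. -/
def pos (x : V × ℤ) : ℤ := P.s x.1 + x.2 * P.n

/-- Right endpoint of a lift. -/
def en (x : V × ℤ) : ℤ := P.e x.1 + x.2 * P.n

/-- The lift `y` lies strictly between the lift `x` and the next translate of `x`. -/
def R (x y : V × ℤ) : Prop := P.en x < P.pos y ∧ P.en y < P.pos x + P.n

/-- Translation of a lift by `j` turns. -/
def sh (j : ℤ) (x : V × ℤ) : V × ℤ := (x.1, x.2 + j)

@[simp] theorem sh_fst (j : ℤ) (x : V × ℤ) : (sh j x).1 = x.1 := rfl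

@[simp] theorem pos_sh (j : ℤ) (x : V × ℤ) : P.pos (sh j x) = P.pos x + j * P.n := by
  simp only [pos, sh]; ring

@[simp] theorem en_sh (j : ℤ) (x : V × ℤ) : P.en (sh j x) = P.en x + j * P.n := by
  simp only [en, sh]; ring

theorem pos_le_en (x : V × ℤ) : P.pos x ≤ P.en x := by
  have := P.le x.1
  simp only [pos, en]; linarith

theorem en_mono {x y : V × ℤ} (h : P.pos x ≤ P.pos y) : P.en x ≤ P.en y := by
  have := P.mono x.1 y.1 (y.2 - x.2) (by simp only [pos] at h; linarith)
  simp only [en]; linarith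

theorem R_sh (j : ℤ) {x y : V × ℤ} : P.R (sh j x) (sh j y) ↔ P.R x y := by
  simp only [R, pos_sh, en_sh]
  constructor <;> rintro ⟨h, h'⟩ <;> constructor <;> linarith

theorem R_sh_left (j : ℤ) {x y : V × ℤ} : P.R (sh j x) y ↔ P.R x (sh (-j) y) := by
  simp only [R, pos_sh, en_sh]
  constructor <;> rintro ⟨h, h'⟩ <;> constructor <;> linarith

theorem R_rot {x y : V × ℤ} : P.R y (sh 1 x) ↔ P.R x y := by
  simp only [R, pos_sh, en_sh]
  constructor <;> rintro ⟨h, h'⟩ <;> constructor <;> linarith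

theorem rel {x y : V × ℤ} (h : P.R x y) : M x.1 y.1 := by
  refine (P.rel_iff _ _).2 ⟨y.2 - x.2, ?_⟩
  obtain ⟨h, h'⟩ := h
  simp only [pos, en] at h h'
  constructor <;> linarith

theorem exists_R (x : V × ℤ) {v : V} (h : M x.1 v) : ∃ b, P.R x (v, b) := by
  obtain ⟨k, h, h'⟩ := (P.rel_iff _ _).1 h
  refine ⟨x.2 + k, ?_⟩
  simp only [R, pos, en]
  constructor <;> linarith

theorem exists_R' (y : V × ℤ) {v : V} (h : M y.1 v) : ∃ b, P.R (v, b) y := by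
  obtain ⟨b, hb⟩ := P.exists_R y h
  refine ⟨b - 1, P.R_rot.1 ?_⟩
  simpa [sh] using hb

theorem symm (P : RoundModel M) {u v : V} (h : M u v) : M v u := by
  obtain ⟨b, hb⟩ := P.exists_R' (u, 0) h
  exact P.rel hb

theorem R_lt {x y : V × ℤ} (h : P.R x y) : P.pos x < P.pos y :=
  (P.pos_le_en x).trans_lt h.1

theorem R_lt' {x y : V × ℤ} (h : P.R x y) : P.pos y < P.pos x + P.n :=
  (P.pos_le_en y).trans_lt h.2

theorem R_unique {x : V × ℤ} {w : V} {b b' : ℤ} (h : P.R x (w, b)) (h' : P.R x (w, b')) :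
    b = b' := by
  have h1 := P.R_lt h
  have h2 := P.R_lt' h
  have h3 := P.R_lt h'
  have h4 := P.R_lt' h'
  have hn := P.npos
  simp only [pos] at h1 h2 h3 h4
  by_contra hne
  rcases lt_or_gt_of_ne hne with hlt | hlt
  · nlinarith
  · nlinarith

theorem irrefl (P : RoundModel M) (u : V) : ¬ M u u := by
  intro h
  obtain ⟨b, hb⟩ := P.exists_R (u, 0) h
  have h1 := P.R_lt hb
  have h2 := P.R_lt' hb
  have hn := P.npos
  simp only [pos] at h1 h2
  have : 0 < b := by nlinarith
  nlinarith

/-- Two crossing pairs can be uncrossed. -/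
theorem cross {x x' w z : V × ℤ} (hx : P.pos x ≤ P.pos x') (hw : P.pos w ≤ P.pos z)
    (h : P.R x z) (h' : P.R x' w) : P.R x w ∧ P.R x' z := by
  have a := P.en_mono hx
  have b := P.en_mono hw
  obtain ⟨h1, h2⟩ := h
  obtain ⟨h3, h4⟩ := h'
  refine ⟨⟨?_, ?_⟩, ⟨?_, ?_⟩⟩ <;> linarith

theorem conv {x y w z : V × ℤ} (hy : P.R x y) (hz : P.R x z) (h : P.pos y ≤ P.pos w)
    (h' : P.pos w ≤ P.pos z) : P.R x w :=
  ⟨hy.1.trans_le h, (P.en_mono h').trans_lt hz.2⟩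

theorem conv' {x y w z : V × ℤ} (hy : P.R y x) (hz : P.R z x) (h : P.pos y ≤ P.pos w)
    (h' : P.pos w ≤ P.pos z) : P.R w x :=
  ⟨(P.en_mono h').trans_lt hz.1, by have := hy.2; linarith⟩

theorem exists_lift (v : V) (p : ℤ) : ∃ c, p ≤ P.pos (v, c) ∧ P.pos (v, c) < p + P.n := by
  have hn := P.npos
  refine ⟨-((P.s v - p) / P.n), ?_⟩
  have h1 := Int.emod_nonneg (P.s v - p) hn.ne'
  have h2 := Int.emod_lt_of_pos (P.s v - p) hn
  have h3 := Int.mul_ediv_add_emod (P.s v - p) P.n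
  simp only [pos]
  constructor <;> nlinarith

/-- If `x ≤ κ ≤ x'` and `x`, `x'` have a common neighbour, then every neighbour of `κ` is a
neighbour of `x` or of `x'`. -/
theorem between {x x' κ t z : V × ℤ} (h : P.pos x ≤ P.pos κ) (h' : P.pos κ ≤ P.pos x')
    (ht : P.R x t) (ht' : P.R x' t) (hz : P.R κ z) : P.R x z ∨ P.R x' z := by
  by_contra hcon
  rw [not_or] at hcon
  have a := P.en_mono h
  have b := P.en_mono h'
  simp only [R, not_and, not_lt] at *
  have c1 := hcon.1 (by linarith)
  have c2 : P.pos z ≤ P.en x' := by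
    by_contra hc
    have := hcon.2 (by linarith)
    linarith
  have d : P.pos z ≤ P.pos t := by linarith
  have := P.en_mono d
  linarith

/-- A lift between a neighbour of `x` and a neighbour of `x'`, where `x` and `x'` have a common
neighbour, is a neighbour of `x` or of `x'`. -/
theorem between' {x x' p q κ t : V × ℤ} (hp : P.R x p) (hq : P.R x' q)
    (h : P.pos p ≤ P.pos κ) (h' : P.pos κ ≤ P.pos q)
    (ht : P.R x t) (ht' : P.R x' t) : P.R x κ ∨ P.R x' κ := by
  by_contra hcon
  rw [not_or] at hcon
  have a := P.en_mono h
  have b := P.en_mono h'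
  simp only [R, not_and, not_lt] at *
  have c1 := hcon.1 (by linarith)
  have c2 : P.pos κ ≤ P.en x' := by
    by_contra hc
    have := hcon.2 (by linarith)
    linarith
  have d : P.pos κ ≤ P.pos t := by linarith
  have := P.en_mono d
  linarith

theorem exists_least {Q : V × ℤ → Prop} (b : ℤ) (hb : ∀ y, Q y → b ≤ P.pos y)
    (h : ∃ y, Q y) : ∃ y, Q y ∧ ∀ z, Q z → P.pos y ≤ P.pos z := by
  obtain ⟨y, hy⟩ := h
  obtain ⟨_, ⟨y, hy, rfl⟩, hl⟩ := Int.exists_least_of_bdd (P := fun z => ∃ y, Q y ∧ P.pos y = z)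
    ⟨b, by rintro _ ⟨y, hy, rfl⟩; exact hb y hy⟩ ⟨_, y, hy, rfl⟩
  exact ⟨y, hy, fun z hz => hl _ ⟨z, hz, rfl⟩⟩

variable {K : Set V}

/-- Domination within `K` by an element of `K` lifts to the line. -/
theorem lift_dom {k v : V} (hk : k ∈ K) (hd : Dom M K v k) (hv : ∃ w ∈ K, M v w) (b : ℤ) :
    ∃ a, ∀ y : V × ℤ, y.1 ∈ K → P.R (v, a) y → P.R (k, b) y := by
  suffices H : ∃ b', ∀ y : V × ℤ, y.1 ∈ K → P.R (v, 0) y → P.R (k, b') y by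
    obtain ⟨b', H⟩ := H
    refine ⟨b - b', fun y hy hR => ?_⟩
    have := H (sh (-(b - b')) y) hy ((P.R_sh_left _).1 (by simpa [sh] using hR))
    rw [← P.R_sh_left] at this
    simpa [sh] using this
  obtain ⟨w, ⟨hwK, hw⟩, hmin⟩ := P.exists_least (Q := fun y => y.1 ∈ K ∧ P.R (v, 0) y)
    (P.pos (v, 0)) (fun y hy => (P.R_lt hy.2).le) (by
      obtain ⟨w, hw, h⟩ := hv
      obtain ⟨c, hc⟩ := P.exists_R (v, 0) h
      exact ⟨(w, c), hw, hc⟩)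
  obtain ⟨b', hb'⟩ := P.exists_R' w (P.symm (hd _ hwK (P.rel hw)))
  refine ⟨b', fun z hzK hz => ?_⟩
  have hwz := hmin z ⟨hzK, hz⟩
  obtain ⟨j, hj⟩ := P.exists_R (k, b') (hd _ hzK (P.rel hz))
  have hn := P.npos
  by_cases hjz : z.2 ≤ j
  · refine P.conv hb' hj hwz ?_
    simp only [pos]
    nlinarith
  · exfalso
    -- the neighbours of `(k, b')` and of `(v, 0)` together cover a full turn, so `k` would be
    -- a neighbour of itself
    have hj1 : P.pos (z.1, j) ≤ P.pos z - P.n := by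
      simp only [pos]
      nlinarith
    obtain ⟨c, hc1, hc2⟩ := P.exists_lift k (P.pos z - P.n)
    by_cases hcw : P.pos (k, c) ≤ P.pos w
    · exact P.irrefl k (P.rel (P.conv hj hb' (hj1.trans hc1) hcw))
    · exact P.irrefl k (hd k hk (P.rel (P.conv hw hz (not_le.1 hcw).le
        (by linarith))))

/-- Vertices with the same nonempty neighbourhood in `K` have lifts with the same neighbours. -/
theorem lift_twin {k v v' : V} (hk : k ∈ K) (hd : Dom M K v k) (hv : ∃ w ∈ K, M v w)
    (hvv : ∀ w ∈ K, M v w ↔ M v' w) (a : ℤ) :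
    ∃ a', ∀ y : V × ℤ, y.1 ∈ K → (P.R (v, a) y ↔ P.R (v', a') y) := by
  obtain ⟨a0, h0⟩ := P.lift_dom hk hd hv 0
  obtain ⟨a1, h1⟩ := P.lift_dom (v := v') hk (fun w hw h => hd w hw ((hvv w hw).2 h))
    (hv.imp fun w hw => ⟨hw.1, (hvv w hw.1).1 hw.2⟩) 0
  have key : ∀ y : V × ℤ, y.1 ∈ K → (P.R (v, a0) y ↔ P.R (v', a1) y) := by
    intro y hy
    constructor <;> intro h
    · obtain ⟨b, hb⟩ := P.exists_R (v', a1) ((hvv _ hy).1 (P.rel h))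
      have : b = y.2 := P.R_unique (h1 (y.1, b) hy hb) (h0 y hy h)
      rw [this] at hb
      exact hb
    · obtain ⟨b, hb⟩ := P.exists_R (v, a0) ((hvv _ hy).2 (P.rel h))
      have : b = y.2 := P.R_unique (h0 (y.1, b) hy hb) (h1 y hy h)
      rw [this] at hb
      exact hb
  refine ⟨a1 + (a - a0), fun y hy => ?_⟩
  have := key (sh (-(a - a0)) y) hy
  rw [← P.R_sh_left, ← P.R_sh_left] at this
  simpa [sh] using this

end RoundModel

/-! ### A stiff core is a blown-up circulant -/

/-- `L` enumerates, in the order of their left endpoints, the lifts of a system of representatives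
of the twin classes of `K`; there are `m` classes, and the lifts number `i` and `j` are related
iff `c ≤ j - i ≤ m - c`. -/
structure IsCircEnum {V : Type*} {M : V → V → Prop} (P : RoundModel M) (K : Set V)
    (m : ℕ) (c : ℤ) (L : ℤ → V × ℤ) : Prop where
  one_le : 1 ≤ c
  two_le : 2 * c ≤ m
  mem : ∀ i, (L i).1 ∈ K
  mono : StrictMono fun i => P.pos (L i)
  period : ∀ i k : ℤ, L (i + k * m) = RoundModel.sh k (L i)
  dom : ∀ v ∈ K, ∃ i, Dom M K v (L i).1
  rel : ∀ i j, P.R (L i) (L j) ↔ c ≤ j - i ∧ j - i ≤ m - c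

theorem const_of_monotone_periodic {d : ℤ → ℤ} (hd : Monotone d) {m : ℤ} (hm : 0 < m)
    (h : ∀ i k, d (i + k * m) = d i) (i : ℤ) : d i = d 0 := by
  have h0 := h 0 i
  rw [zero_add] at h0
  rcases le_total 0 i with hi | hi
  · exact le_antisymm ((hd (by nlinarith : i ≤ i * m)).trans h0.le) (hd hi)
  · exact le_antisymm (hd hi) (h0.ge.trans (hd (by nlinarith : i * m ≤ i)))

theorem strictMono_sub_id {f : ℤ → ℤ} (hf : StrictMono f) : Monotone fun i => f i - i := by
  refine monotone_int_of_le_succ fun i => ?_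
  have : f i < f (i + 1) := hf (by omega)
  show f i - i ≤ f (i + 1) - (i + 1)
  omega

theorem orderIso_int_add (g : ℤ ≃o ℤ) (i : ℤ) : g i = i + g 0 := by
  have h : ∀ i, g (i + 1) = g i + 1 := fun i => by
    have := g.map_succ i
    simpa [Order.succ_eq_add_one] using this
  induction i with
  | zero => simp
  | succ k ih => rw [h, ih]; ring
  | pred k ih =>
    have := h (-(k : ℤ) - 1)
    rw [sub_add_cancel, ih] at this
    linarith

theorem exists_representatives {V : Type*} {M : V → V → Prop} {K : Set V}
    (hst : ∀ u ∈ K, ∀ v ∈ K, Dom M K u v → Dom M K v u) :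
    ∃ K0 ⊆ K, (∀ v ∈ K, ∃ u ∈ K0, Dom M K v u) ∧
      ∀ u ∈ K0, ∀ v ∈ K0, Dom M K u v → u = v := by
  let S : Setoid K :=
    { r := fun u v => Dom M K u v
      iseqv := ⟨fun _ _ _ h => h, fun {u v} h => hst _ u.2 _ v.2 h,
        fun h1 h2 w hw h => h2 w hw (h1 w hw h)⟩ }
  refine ⟨Set.range fun q : Quotient S => (q.out : V), ?_, ?_, ?_⟩
  · rintro _ ⟨q, rfl⟩
    exact q.out.2
  · intro v hv
    exact ⟨_, ⟨Quotient.mk S ⟨v, hv⟩, rfl⟩, S.symm (Quotient.mk_out (s := S) ⟨v, hv⟩)⟩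
  · rintro _ ⟨q, rfl⟩ _ ⟨q', rfl⟩ h
    have : q.out ≈ q'.out := h
    rw [Quotient.out_equiv_out] at this
    rw [this]

/-- The positions of the lifts of `K0` form an unbounded discrete subset of `ℤ`, which is listed in
increasing order. -/
theorem exists_listing {V : Type*} {M : V → V → Prop} (P : RoundModel M) {K0 : Set V}
    (hne : K0.Nonempty)
    (hinj : ∀ x y : V × ℤ, x.1 ∈ K0 → y.1 ∈ K0 → P.pos x = P.pos y → x = y) :
    ∃ (m : ℤ) (L : ℤ → V × ℤ), 0 < m ∧ (∀ i, (L i).1 ∈ K0) ∧ (StrictMono fun i => P.pos (L i)) ∧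
      (∀ i k, L (i + k * m) = RoundModel.sh k (L i)) ∧ ∀ x : V × ℤ, x.1 ∈ K0 → ∃ i, L i = x := by
  classical
  let X : Set ℤ := {p | ∃ x : V × ℤ, x.1 ∈ K0 ∧ P.pos x = p}
  have hn := P.npos
  have hsh : ∀ j p, p ∈ X → p + j * P.n ∈ X := by
    rintro j _ ⟨x, hx, rfl⟩
    exact ⟨RoundModel.sh j x, hx, P.pos_sh j x⟩
  have : Nonempty X := by
    obtain ⟨u, hu⟩ := hne
    exact ⟨⟨_, (u, 0), hu, rfl⟩⟩
  have : NoMaxOrder X := ⟨fun p => ⟨⟨_, hsh 1 p p.2⟩, by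
    show (p : ℤ) < p + 1 * P.n
    linarith⟩⟩
  have : NoMinOrder X := ⟨fun p => ⟨⟨_, hsh (-1) p p.2⟩, by
    show (p : ℤ) + -1 * P.n < p
    linarith⟩⟩
  let : SuccOrder X := LinearLocallyFiniteOrder.succOrder X
  let : PredOrder X := LinearLocallyFiniteOrder.predOrder X
  let e : X ≃o ℤ := orderIsoIntOfLinearSuccPredArch
  choose lift hl1 hl2 using fun p : X => p.2
  let tr : X ≃o X :=
    { toFun := fun p => ⟨_, hsh 1 p p.2⟩
      invFun := fun p => ⟨_, hsh (-1) p p.2⟩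
      left_inv := fun p => by ext; simp
      right_inv := fun p => by ext; simp
      map_rel_iff' := by
        intro a b
        show (a : ℤ) + 1 * P.n ≤ b + 1 * P.n ↔ (a : ℤ) ≤ b
        constructor <;> intro h <;> linarith }
  let g : ℤ ≃o ℤ := (e.symm.trans tr).trans e
  have hg := orderIso_int_add g
  have hL1 : ∀ i, lift (e.symm (i + g 0)) = RoundModel.sh 1 (lift (e.symm i)) := by
    intro i
    apply hinj _ (RoundModel.sh 1 _) (hl1 _) (hl1 (e.symm i))
    rw [hl2, P.pos_sh, hl2, ← hg]
    simp [g, tr]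
  have hmono : StrictMono fun i => P.pos (lift (e.symm i)) := by
    intro i j hij
    simp only [hl2]
    exact e.symm.strictMono hij
  refine ⟨g 0, fun i => lift (e.symm i), ?_, fun i => hl1 _, hmono, ?_, ?_⟩
  · have := hL1 0
    have h2 := P.pos_sh 1 (lift (e.symm 0))
    rw [← this] at h2
    have h3 := hmono.lt_iff_lt (a := 0) (b := 0 + g 0)
    rw [zero_add] at *
    apply h3.1
    show P.pos (lift (e.symm 0)) < P.pos (lift (e.symm (g 0)))
    rw [h2]; linarith
  · intro i k
    have key : ∀ (k : ℤ) (i : ℤ), lift (e.symm (i + k * g 0)) = RoundModel.sh k (lift (e.symm i)) := by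
      intro k
      induction k with
      | zero => intro i; simp [RoundModel.sh]
      | succ k ih =>
        intro i
        rw [show i + ((k : ℤ) + 1) * g 0 = (i + k * g 0) + g 0 by ring, hL1, ih]
        simp [RoundModel.sh, add_assoc]
      | pred k ih =>
        intro i
        have h1 := hL1 (i + (-(k : ℤ) - 1) * g 0)
        rw [show i + (-(k : ℤ) - 1) * g 0 + g 0 = i + (-(k : ℤ)) * g 0 by ring, ih] at h1
        have h2 := congrArg Prod.fst h1
        have h3 := congrArg Prod.snd h1
        simp only [RoundModel.sh] at h2 h3
        ext
        · exact h2.symm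
        · simp only [RoundModel.sh]; linarith
    exact key k i
  · intro x hx
    refine ⟨e ⟨_, x, hx, rfl⟩, ?_⟩
    apply hinj _ _ (hl1 _) hx
    rw [hl2]; simp

/-- A stiff vertex set without isolated vertices is a blown-up circulant. -/
theorem exists_circEnum {V : Type*} {M : V → V → Prop} (P : RoundModel M) {K : Set V}
    (hne : K.Nonempty) (hnon : ∀ v ∈ K, ∃ w ∈ K, M v w)
    (hst : ∀ u ∈ K, ∀ v ∈ K, Dom M K u v → Dom M K v u) :
    ∃ m c L, IsCircEnum P K m c L := by
  obtain ⟨K0, hK0, hrep, huniq⟩ := exists_representatives hst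
  have hne0 : K0.Nonempty := by
    obtain ⟨v, hv⟩ := hne
    obtain ⟨u, hu, -⟩ := hrep v hv
    exact ⟨u, hu⟩
  have hn := P.npos
  have hinj : ∀ x y : V × ℤ, x.1 ∈ K0 → y.1 ∈ K0 → P.pos x = P.pos y → x = y := by
    intro x y hx hy hxy
    have h1 : x.1 = y.1 := by
      refine huniq _ hx _ hy fun w _ h => ?_
      obtain ⟨b, hb⟩ := P.exists_R x h
      have : P.R y (w, b) := by
        have e := le_antisymm (P.en_mono hxy.le) (P.en_mono hxy.ge)
        simpa only [RoundModel.R, e, hxy] using hb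
      exact P.rel this
    refine Prod.ext h1 ?_
    simp only [RoundModel.pos, h1] at hxy
    exact mul_right_cancel₀ hn.ne' (add_left_cancel hxy)
  obtain ⟨m, L, hm, hL, hmono, hper, hsurj⟩ := exists_listing P hne0 hinj
  -- every `K`-neighbour of a vertex of `K` has a representative among the neighbouring `L j`
  have hnbr : ∀ i, ∀ w ∈ K, M (L i).1 w → ∃ j, P.R (L i) (L j) ∧ Dom M K (L j).1 w := by
    intro i w hw h
    obtain ⟨u, hu, hwu⟩ := hrep w hw
    obtain ⟨b, hb⟩ := P.exists_R (L i) (P.symm (hwu _ (hK0 (hL i)) (P.symm h)))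
    obtain ⟨j, hj⟩ := hsurj (u, b) hu
    refine ⟨j, by rwa [hj], ?_⟩
    rw [hj]
    exact hst _ hw _ (hK0 hu) hwu
  have hrot : ∀ i j, P.R (L i) (L j) ↔ P.R (L j) (L (i + m)) := by
    intro i j
    have := hper i 1
    rw [one_mul] at this
    rw [this, P.R_rot]
  have hle : ∀ i j, i ≤ j ↔ P.pos (L i) ≤ P.pos (L j) := fun i j => hmono.le_iff_le.symm
  have hp : ∀ i, ∃ j, P.R (L i) (L j) ∧ ∀ j', P.R (L i) (L j') → j ≤ j' := by
    intro i
    obtain ⟨w, hw, h⟩ := hnon _ (hK0 (hL i))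
    obtain ⟨j, hj, -⟩ := hnbr i w hw h
    exact Int.exists_least_of_bdd (P := fun j => P.R (L i) (L j))
      ⟨i, fun j hj => (hle _ _).2 (P.R_lt hj).le⟩ ⟨j, hj⟩
  choose p hpR hpmin using hp
  have hpmono : StrictMono p := by
    intro i i' hii
    by_contra hcon
    rw [not_lt] at hcon
    have hpos := (hle i i').1 hii.le
    have hc := P.cross hpos ((hle _ _).1 hcon) (hpR i) (hpR i')
    have heq : p i' = p i := le_antisymm hcon (hpmin i _ hc.1)
    have hdom : Dom M K (L i).1 (L i').1 := by
      intro w hw h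
      obtain ⟨j, hj, hjw⟩ := hnbr i w hw h
      have hj' := (hle _ _).1 (hpmin i j hj)
      have : P.R (L i') (L j) := by
        refine ⟨?_, ?_⟩
        · have := (hpR i').1
          rw [heq] at this
          linarith
        · have := hj.2
          linarith
      exact P.symm (hjw _ (hK0 (hL i')) (P.symm (P.rel this)))
    have h1 := huniq _ (hL i) _ (hL i') hdom
    have h2 : (L i).2 < (L i').2 := by
      have := hmono hii
      simp only [RoundModel.pos, h1] at this
      by_contra hcc
      nlinarith
    have h3 := P.R_lt' (hpR i)
    have h4 := P.R_lt (hpR i')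
    rw [heq] at h4
    have h5 : P.pos (L i) + P.n ≤ P.pos (L i') := by
      simp only [RoundModel.pos, h1]
      nlinarith
    linarith
  have hpper : ∀ i k, p (i + k * m) = p i + k * m := by
    intro i k
    apply le_antisymm
    · apply hpmin
      rw [hper, hper, P.R_sh]
      exact hpR i
    · have : P.R (L i) (L (p (i + k * m) + (-k) * m)) := by
        rw [hper]
        rw [← P.R_sh_left, ← hper]
        exact hpR _
      have := hpmin i _ this
      linarith
  have hpc : ∀ i, p i = i + p 0 := by
    intro i
    have := const_of_monotone_periodic (strictMono_sub_id hpmono) hm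
      (fun i k => by simp only [hpper]; ring) i
    linarith
  have hc1 : ∀ i j, P.R (L i) (L j) → p 0 ≤ j - i ∧ j - i ≤ m - p 0 := by
    intro i j h
    have h1 := hpmin i j h
    have h2 := hpmin j _ ((hrot i j).1 h)
    rw [hpc] at h1 h2
    constructor <;> linarith
  have h0 := hc1 0 _ (hpR 0)
  lift m to ℕ using hm.le
  refine ⟨m, p 0, L, ?_, by linarith, fun i => hK0 (hL i), hmono, hper, ?_, ?_⟩
  · have := P.R_lt (hpR 0)
    have := hmono.lt_iff_lt.1 this
    linarith
  · intro v hv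
    obtain ⟨u, hu, h⟩ := hrep v hv
    obtain ⟨i, hi⟩ := hsurj (u, 0) hu
    exact ⟨i, by rwa [hi]⟩
  · refine fun i j => ⟨hc1 i j, fun ⟨h1, h2⟩ => ?_⟩
    have hx : P.R (L (j + p 0 - m)) (L j) := by
      rw [hrot, sub_add_cancel, ← hpc]
      exact hpR j
    have hy : P.R (L i) (L (i + p 0)) := by
      rw [← hpc]
      exact hpR i
    exact (P.cross ((hle _ _).1 (by linarith)) ((hle _ _).1 (by linarith)) hx hy).2

namespace IsCircEnum

variable {V : Type*} {M : V → V → Prop} {P : RoundModel M} {K : Set V} {m : ℕ} {c : ℤ}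
  {L : ℤ → V × ℤ}

theorem fst_eq (hE : IsCircEnum P K m c L) {i j : ℤ} (h : (i : ZMod m) = j) :
    (L i).1 = (L j).1 := by
  rw [ZMod.intCast_eq_intCast_iff_dvd_sub] at h
  obtain ⟨k, hk⟩ := h
  have := hE.period i k
  rw [show i + k * m = j by linarith] at this
  rw [this]; rfl

theorem rel_far (hE : IsCircEnum P K m c L) (i j : ℤ) :
    M (L i).1 (L j).1 ↔ Far m c ((j : ZMod m) - i) := by
  constructor
  · intro h
    obtain ⟨b, hb⟩ := P.exists_R _ h
    have e : ((L j).1, b) = L (j + (b - (L j).2) * m) := by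
      rw [hE.period]; simp [RoundModel.sh]
    rw [e, hE.rel] at hb
    exact ⟨_, hb.1, hb.2, by push_cast; simp⟩
  · rintro ⟨x, h1, h2, h⟩
    have : (((i + x : ℤ)) : ZMod m) = j := by push_cast; rw [h]; ring
    rw [← hE.fst_eq this]
    exact P.rel ((hE.rel _ _).2 (by constructor <;> linarith))

theorem dom_far (hE : IsCircEnum P K m c L) {i j : ℤ} (h : Dom M K (L i).1 (L j).1) :
    (i : ZMod m) = j := by
  have hm : 0 < m := by have := hE.one_le; have := hE.two_le; omega
  have : NeZero m := ⟨hm.ne'⟩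
  refine far_inj hE.one_le hE.two_le fun x hx => ?_
  obtain ⟨y, -, -, rfl⟩ := exists_intCast x
  rw [← hE.rel_far] at hx ⊢
  exact h _ (hE.mem y) hx

theorem nbr_dom (hE : IsCircEnum P K m c L) (hmc : 2 * c = m)
    (hst : ∀ u ∈ K, ∀ v ∈ K, Dom M K u v → Dom M K v u) :
    ∀ u ∈ K, ∀ z ∈ K, ∀ z' ∈ K, M u z → M u z' → Dom M K z z' := by
  intro u hu z hz z' hz' h h'
  obtain ⟨i, hi⟩ := hE.dom u hu
  have key : ∀ z ∈ K, M u z → Dom M K z (L (i + c)).1 := by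
    intro z hz h
    obtain ⟨j, hj⟩ := hE.dom z hz
    have h1 := P.symm (hj _ (hE.mem i) (P.symm (hi z hz h)))
    obtain ⟨x, h2, h3, h4⟩ := (hE.rel_far i j).1 h1
    obtain rfl : x = c := by linarith
    rw [hE.fst_eq (i := i + x) (j := j) (by push_cast; rw [h4]; ring)]
    exact hj
  intro w hw hzw
  exact hst _ hz' _ (hE.mem _) (key z' hz' h') w hw (key z hz h w hw hzw)

theorem two_nbrs (hE : IsCircEnum P K m c L) (hmc : 2 * c < m)
    (hst : ∀ u ∈ K, ∀ v ∈ K, Dom M K u v → Dom M K v u) {u : V} (hu : u ∈ K) :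
    ∃ z ∈ K, ∃ z' ∈ K, M u z ∧ M u z' ∧ ¬ Dom M K z z' := by
  obtain ⟨i, hi⟩ := hE.dom u hu
  have hi' := hst _ hu _ (hE.mem i) hi
  have hc := hE.one_le
  refine ⟨_, hE.mem (i + c), _, hE.mem (i + c + 1), hi' _ (hE.mem _) (P.rel ((hE.rel _ _).2 ?_)),
    hi' _ (hE.mem _) (P.rel ((hE.rel _ _).2 ?_)), fun h => ?_⟩
  · constructor <;> linarith
  · constructor <;> linarith
  · have := intCast_inj_of_lt (hE.dom_far h) (by linarith) (by linarith)
    linarith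

theorem trace_nonempty (hE : IsCircEnum P K m c L) (hmc : 2 * c < m) (v : V) :
    ∃ w ∈ K, M v w := by
  have hs := strictMono_sub_id hE.mono
  set q := P.pos (v, 0) with hq
  set f : ℤ → ℤ := fun i => P.pos (L i) with hf
  obtain ⟨i, hi, hmax⟩ := Int.exists_greatest_of_bdd (P := fun i => f i ≤ q)
    ⟨max 0 (q - f 0), fun i h => by
      by_contra hcon
      rw [not_le, max_lt_iff] at hcon
      have : f 0 - 0 ≤ f i - i := hs hcon.1.le
      omega⟩
    ⟨min 0 (q - f 0), by
      have : f (min 0 (q - f 0)) - min 0 (q - f 0) ≤ f 0 - 0 := hs (min_le_left _ _)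
      have := min_le_right 0 (q - f 0)
      linarith⟩
  have hi' : q < f (i + 1) := by
    by_contra hcon
    have := hmax _ (not_lt.1 hcon)
    linarith
  have hc := hE.one_le
  have h1 : P.R (L i) (L (i + 1 + c)) := (hE.rel _ _).2 (by constructor <;> linarith)
  have h2 : P.R (L (i + 1)) (L (i + 1 + c)) := (hE.rel _ _).2 (by constructor <;> linarith)
  exact ⟨_, hE.mem _, P.rel (P.conv' (w := (v, 0)) h1 h2 hi hi'.le)⟩

/-- When `2 * c < m`, rigidity of the circulant forces `τ` to fix all twin classes of the core. -/
theorem core_fixed {τ : V ≃ V} (T : Twist M τ) (hE : IsCircEnum P K m c L) (hmc : 2 * c < m)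
    (hst : ∀ u ∈ K, ∀ v ∈ K, Dom M K u v → Dom M K v u) (hinv : ∀ v, τ v ∈ K ↔ v ∈ K)
    {u : V} (hu : u ∈ K) : Dom M K (τ u) u := by
  have hm : 0 < m := by have := hE.one_le; have := hE.two_le; omega
  have : NeZero m := ⟨hm.ne'⟩
  have hex : ∀ z : ZMod m, ∃ j : ℤ, (j : ZMod m) = z := fun z => by
    obtain ⟨y, -, -, h⟩ := exists_intCast z
    exact ⟨y, h⟩
  choose ι hι using hex
  have hmem : ∀ z, (L (ι z)).1 ∈ K := fun z => hE.mem _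
  have hfar : ∀ z w, M (L (ι z)).1 (L (ι w)).1 ↔ Far m c (w - z) := by
    intro z w
    rw [hE.rel_far, hι, hι]
  have hdom : ∀ v ∈ K, ∃ z, Dom M K v (L (ι z)).1 := by
    intro v hv
    obtain ⟨i, hi⟩ := hE.dom v hv
    refine ⟨(i : ZMod m), ?_⟩
    rw [hE.fst_eq (hι (i : ZMod m))]
    exact hi
  choose t ht using fun z => hdom (τ (L (ι z)).1) ((hinv _).2 (hmem z))
  have ht' : ∀ z, Dom M K (L (ι (t z))).1 (τ (L (ι z)).1) := fun z =>
    hst _ ((hinv _).2 (hmem z)) _ (hmem _) (ht z)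
  have hrel : ∀ z w, M (τ (L (ι z)).1) (L (ι w)).1 ↔ Far m c (w - t z) := fun z w => by
    rw [← hfar]
    exact ⟨ht z _ (hmem w), ht' z _ (hmem w)⟩
  have hneg : ∀ z w : ZMod m, Far m c (w - z) ↔ Far m c (z - w) := fun z w => by
    rw [← hfar, ← hfar]
    exact ⟨P.symm, P.symm⟩
  have hrig := circulant_rigid hE.one_le hmc t ?_ ?_ ?_
  · obtain ⟨z, hz⟩ := hdom u hu
    have h1 := hz.tau T hinv
    have h2 := ht z
    rw [hrig z] at h2
    have h3 := hst _ hu _ (hmem z) hz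
    exact fun w hw h => h3 w hw (h2 w hw (h1 w hw h))
  · intro z
    have hv : τ.symm (L (ι z)).1 ∈ K := by
      rw [← hinv]; simpa using hmem z
    obtain ⟨y, hy⟩ := hdom _ hv
    have h1 := hy.tau T hinv
    rw [Equiv.apply_symm_apply] at h1
    have h2 : Dom M K (L (ι z)).1 (L (ι (t y))).1 := fun w hw h => ht y w hw (h1 w hw h)
    have := hE.dom_far h2
    rw [hι, hι] at this
    exact ⟨y, this.symm⟩
  · intro i j
    rw [← hrel, T.twist, hneg, ← hrel]
    exact ⟨T.symm _ _, T.symm _ _⟩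
  · intro i
    rw [← hrel]
    exact T.irrefl' _

end IsCircEnum

/-! ### Propagating triviality of the twist from the core to the whole graph -/

section Propagation

variable {V : Type*} {M : V → V → Prop} {τ : V ≃ V}

/-- On a `τ`-invariant finite set, the neighbourhoods of `v` and of `τ v` have the same size, so
an inclusion between them is an equality. -/
theorem Twist.rel_iff_of_imp [Finite V] (T : Twist M τ) {S : Set V} (hS : ∀ w, τ w ∈ S ↔ w ∈ S)
    {v : V} (h : (∀ w ∈ S, M v w → M (τ v) w) ∨ ∀ w ∈ S, M (τ v) w → M v w) :
    ∀ w ∈ S, M v w ↔ M (τ v) w := by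
  set A : Set V := {w | w ∈ S ∧ M v w} with hA
  set A' : Set V := {w | w ∈ S ∧ M (τ v) w} with hA'
  have hAA : A = τ '' A' := by
    ext w
    constructor
    · rintro ⟨hw, h⟩
      refine ⟨τ.symm w, ⟨?_, ?_⟩, by simp⟩
      · rw [← hS]; simpa using hw
      · rw [T.twist]; simpa using h
    · rintro ⟨w, ⟨hw, h⟩, rfl⟩
      exact ⟨(hS w).2 hw, (T.twist _ _).1 h⟩
  have hcard : A.ncard = A'.ncard := by
    rw [hAA, Set.ncard_image_of_injective _ τ.injective]
  have heq : A = A' := by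
    rcases h with h | h
    · exact Set.eq_of_subset_of_ncard_le (s := A) (t := A')
        (fun w hw => ⟨hw.1, h w hw.1 hw.2⟩) hcard.ge
    · exact (Set.eq_of_subset_of_ncard_le (s := A') (t := A)
        (fun w hw => ⟨hw.1, h w hw.1 hw.2⟩) hcard.le).symm
  intro w hw
  have := Set.ext_iff.1 heq w
  simpa [hA, hA', hw] using this

theorem Twist.exists_swap [Finite V] (T : Twist M τ) {S : Set V} (hS : ∀ w, τ w ∈ S ↔ w ∈ S)
    {v w0 : V} (h0 : w0 ∈ S) (h : ¬ (M v w0 ↔ M (τ v) w0)) :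
    (∃ w ∈ S, M v w ∧ ¬ M (τ v) w) ∧ ∃ w ∈ S, M (τ v) w ∧ ¬ M v w := by
  constructor
  · by_contra hcon
    push Not at hcon
    exact h (T.rel_iff_of_imp hS (Or.inl hcon) w0 h0)
  · by_contra hcon
    push Not at hcon
    exact h (T.rel_iff_of_imp hS (Or.inr hcon) w0 h0)

variable {K : Set V}

/-- A lift related to both ends `y₂ ≤ y` of two non-crossing pairs `x y₂`, `x' y` lies between
`x` and `x'`. -/
theorem RoundModel.squeeze (P : RoundModel M) {x x' y y2 z : V × ℤ} (hyy : P.pos y2 ≤ P.pos y) (h2 : P.R x y2)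
    (h1 : P.R x' y) (h3 : ¬ P.R x y) (h4 : ¬ P.R x' y2) (hz : P.R z y) (hz2 : P.R z y2) :
    P.pos x ≤ P.pos z ∧ P.pos z ≤ P.pos x' := by
  constructor
  · by_contra hcon
    exact h3 (P.cross (not_le.1 hcon).le hyy hz h2).2
  · by_contra hcon
    exact h4 (P.cross (not_le.1 hcon).le hyy h1 hz2).1

/-- Two vertices whose `K`-traces are dominated by the same `k ∈ K` cannot have traces that differ
in both directions inside one twin class of `K`. -/
theorem no_swap_core (P : RoundModel M) (hst : ∀ u ∈ K, ∀ v ∈ K, Dom M K u v → Dom M K v u)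
    (hnb : ∀ u ∈ K, ∃ z ∈ K, ∃ z' ∈ K, M u z ∧ M u z' ∧ ¬ Dom M K z z')
    {v v' k w w2 : V} (hk : k ∈ K) (hd : Dom M K v k) (hd' : Dom M K v' k)
    (hw : w ∈ K) (hw2 : w2 ∈ K) (hww : Dom M K w w2)
    (h2 : M v w2) (h4 : ¬ M v' w2) (h1 : M v' w) (h3 : ¬ M v w) : False := by
  obtain ⟨a, ha⟩ := P.lift_dom hk hd ⟨_, hw2, h2⟩ 0
  obtain ⟨a', ha'⟩ := P.lift_dom hk hd' ⟨_, hw, h1⟩ 0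
  suffices H : ∀ (v v' w w2 : V) (a a' : ℤ), (∀ y : V × ℤ, y.1 ∈ K → P.R (v, a) y → P.R (k, 0) y) →
      (∀ y : V × ℤ, y.1 ∈ K → P.R (v', a') y → P.R (k, 0) y) → w ∈ K → w2 ∈ K → Dom M K w w2 →
      M v w2 → ¬ M v' w2 → M v' w → ¬ M v w → P.pos (v, a) ≤ P.pos (v', a') → False by
    rcases le_total (P.pos (v, a)) (P.pos (v', a')) with hle | hle
    · exact H v v' w w2 a a' ha ha' hw hw2 hww h2 h4 h1 h3 hle
    · exact H v' v w2 w a' a ha' ha hw2 hw (hst _ hw _ hw2 hww) h1 h3 h2 h4 hle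
  clear! a a' v v' w w2
  intro v v' w w2 a a' ha ha' hw hw2 hww h2 h4 h1 h3 hle
  obtain ⟨b2, hb2⟩ := P.exists_R (v, a) h2
  obtain ⟨b, hb⟩ := P.exists_R (v', a') h1
  have n3 : ¬ P.R (v, a) (w, b) := fun h => h3 (P.rel h)
  have n4 : ¬ P.R (v', a') (w2, b2) := fun h => h4 (P.rel h)
  have hk2 := ha _ hw2 hb2
  have hk1 := ha' _ hw hb
  have hyy : P.pos (w2, b2) ≤ P.pos (w, b) := by
    by_contra hcon
    exact n3 (P.cross hle (not_le.1 hcon).le hb2 hb).1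
  -- the two twin lifts inside the window of `(k, 0)` have the same neighbours in `K`
  have htw : ∀ z : V × ℤ, z.1 ∈ K → P.R z (w, b) → P.R z (w2, b2) := by
    obtain ⟨b', hb'⟩ := P.lift_twin (v := w) (v' := w2) hw (fun _ _ h => h)
      ⟨k, hk, P.symm (P.rel hk1)⟩
      (fun u hu => ⟨hww u hu, hst _ hw _ hw2 hww u hu⟩) b
    have : b' = b2 := P.R_unique (P.R_rot.1 ((hb' (RoundModel.sh 1 (k, 0)) hk).1
      (P.R_rot.2 hk1))) hk2
    subst this
    intro z hz h
    exact P.R_rot.1 ((hb' (RoundModel.sh 1 z) hz).1 (P.R_rot.2 h))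
  have hkz : ∀ z ∈ K, M w z → Dom M K z k := by
    intro z hz hwz
    obtain ⟨d, hd⟩ := P.exists_R' (w, b) hwz
    have hd2 := htw _ hz hd
    obtain ⟨p1, p2⟩ := P.squeeze hyy hb2 hb n3 n4 hd hd2
    intro u hu hzu
    obtain ⟨f, hf⟩ := P.exists_R (z, d) hzu
    have : P.R (k, 0) (u, f) := by
      rcases le_total (P.pos (w, b)) (P.pos (u, f)) with q | q
      · exact ha' (u, f) hu (P.cross p2 q hf hb).2
      rcases le_total (P.pos (u, f)) (P.pos (w2, b2)) with q' | q'
      · exact ha (u, f) hu (P.cross p1 q' hb2 hf).1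
      · exact P.conv hk2 hk1 q' q
    exact P.rel this
  obtain ⟨z, hz, z', hz', hwz, hwz', hn⟩ := hnb w hw
  exact hn fun u hu h => hst _ hz' _ hk (hkz z' hz' hwz') u hu (hkz z hz hwz u hu h)

/-- Two vertices with the same `K`-trace cannot have neighbourhoods that differ in both directions
inside a class of vertices with the same `K`-trace. -/
theorem no_swap (P : RoundModel M)
    (hnb : ∀ u ∈ K, ∃ z ∈ K, ∃ z' ∈ K, M u z ∧ M u z' ∧ ¬ Dom M K z z')
    (hne : ∀ v, ∃ w ∈ K, M v w)
    {v v' k w w2 l : V} (hk : k ∈ K) (hd : Dom M K v k) (hl : l ∈ K) (hdl : Dom M K w l)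
    (hkl : M k l) (hvv : ∀ u ∈ K, M v u ↔ M v' u) (hww : ∀ u ∈ K, M w u ↔ M w2 u)
    (h2 : M v w2) (h4 : ¬ M v' w2) (h1 : M v' w) (h3 : ¬ M v w) : False := by
  obtain ⟨a', ha⟩ := P.lift_twin hk hd (hne v) hvv 0
  suffices H : ∀ (v v' w w2 : V) (a a' : ℤ), Dom M K v k → Dom M K w l →
      (∀ y : V × ℤ, y.1 ∈ K → (P.R (v, a) y ↔ P.R (v', a') y)) →
      (∀ u ∈ K, M w u ↔ M w2 u) →
      M v w2 → ¬ M v' w2 → M v' w → ¬ M v w → P.pos (v, a) ≤ P.pos (v', a') → False by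
    rcases le_total (P.pos (v, 0)) (P.pos (v', a')) with hle | hle
    · exact H v v' w w2 0 a' hd hdl ha hww h2 h4 h1 h3 hle
    · exact H v' v w2 w a' 0 (fun u hu h => hd u hu ((hvv u hu).2 h))
        (fun u hu h => hdl u hu ((hww u hu).2 h)) (fun y hy => (ha y hy).symm)
        (fun u hu => (hww u hu).symm) h1 h3 h2 h4 hle
  clear! a' v v' w w2
  intro v v' w w2 a a' hd hdl ha hww h2 h4 h1 h3 hle
  have hn := P.npos
  obtain ⟨b2, hb2⟩ := P.exists_R (v, a) h2
  obtain ⟨b, hb⟩ := P.exists_R (v', a') h1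
  have n3 : ¬ P.R (v, a) (w, b) := fun h => h3 (P.rel h)
  have n4 : ¬ P.R (v', a') (w2, b2) := fun h => h4 (P.rel h)
  have hyy : P.pos (w2, b2) ≤ P.pos (w, b) := by
    by_contra hcon
    exact n3 (P.cross hle (not_le.1 hcon).le hb2 hb).1
  obtain ⟨t0, ht0K, ht0⟩ := hne v
  obtain ⟨q0, hq0⟩ := P.exists_R (v, a) ht0
  have hq0' := (ha (t0, q0) ht0K).1 hq0
  -- less than a full turn separates `w2` from `w`
  have hyn : P.pos (w, b) < P.pos (w2, b2) + P.n := by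
    by_contra hcon
    have e1 : P.pos (RoundModel.sh 1 (w2, b2)) ≤ P.pos (w, b) := by
      rw [P.pos_sh]; linarith
    have e2 := P.en_mono e1
    rw [P.en_sh] at e2
    refine h4 (P.symm (P.rel (x := (w2, b2)) (y := (v', a')) ⟨?_, ?_⟩))
    · have := hb.2
      linarith
    · have := hq0'.1
      have := P.R_lt' hq0
      have := P.pos_le_en (v, a)
      have := hb2.1
      linarith
  -- the lifts of `K` between `w2` and `w` are exactly the common `K`-neighbours
  have hmid : ∀ κ : V × ℤ, κ.1 ∈ K → P.pos (w2, b2) ≤ P.pos κ → P.pos κ ≤ P.pos (w, b) →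
      P.R (v, a) κ := by
    intro κ hκ p1 p2
    rcases P.between' hb2 hb p1 p2 hq0 hq0' with h | h
    · exact h
    · exact (ha _ hκ).2 h
  obtain ⟨b', hb'⟩ := P.lift_twin hl hdl (hne w) hww b
  obtain ⟨u0, hu0K, hu0⟩ := hne w
  obtain ⟨g0, hg0⟩ := P.exists_R (w, b) hu0
  have hg0' := (hb' (u0, g0) hu0K).1 hg0
  have hpos' : P.pos (w2, b') = P.pos (w2, b2) + (b' - b2) * P.n := by
    simp only [RoundModel.pos]; ring
  have hcase : b' = b2 ∨ b' = b2 + 1 := by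
    have i1 := P.R_lt hg0
    have i2 := P.R_lt' hg0
    have i3 := P.R_lt hg0'
    have i4 := P.R_lt' hg0'
    rw [hpos'] at i3 i4
    have j1 : b' - b2 < 2 := by
      by_contra hcon
      nlinarith
    have j2 : -1 < b' - b2 := by
      by_contra hcon
      nlinarith
    omega
  rcases hcase with rfl | rfl
  · -- the traces of `w2` and `w` are aligned without a turn
    have hzT : ∀ z : V × ℤ, z.1 ∈ K → P.R z (w, b) → ∀ κ : V × ℤ, κ.1 ∈ K →
        (P.R z κ ↔ P.R (v, a) κ) := by
      intro z hz hzw κ hκ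
      have hz2 : P.R z (w2, b') :=
        P.R_rot.1 ((hb' (RoundModel.sh 1 z) hz).1 (P.R_rot.2 hzw))
      obtain ⟨p1, p2⟩ := P.squeeze hyy hb2 hb n3 n4 hzw hz2
      constructor
      · intro h
        rcases P.between p1 p2 hq0 hq0' h with h | h
        · exact h
        · exact (ha _ hκ).2 h
      · intro h
        exact P.conv' h ((ha _ hκ).1 h) p1 p2
    have htS : ∀ z : V × ℤ, z.1 ∈ K → P.R (t0, q0) z → P.R (w, b) z := by
      intro z hz htz
      have r1 := P.R_rot.2 hq0
      have r2 := P.R_rot.2 hq0'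
      obtain ⟨p1, p2⟩ := P.squeeze (x := (w2, b')) (x' := (w, b)) (y := RoundModel.sh 1 (v', a'))
        (y2 := RoundModel.sh 1 (v, a)) (by simpa using hle) (P.R_rot.2 hb2) (P.R_rot.2 hb)
        (fun h => n4 (P.R_rot.1 h)) (fun h => n3 (P.R_rot.1 h)) r2 r1
      rcases P.between p1 p2 hg0' hg0 htz with h | h
      · exact (hb' _ hz).2 h
      · exact h
    obtain ⟨z, hz, z', hz', htz, htz', hnd⟩ := hnb t0 ht0K
    have key : ∀ z ∈ K, M t0 z → ∀ u ∈ K, (M z u ↔ M v u) := by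
      intro z hz htz u hu
      obtain ⟨f, hf⟩ := P.exists_R' (t0, q0) htz
      have hfw : P.R (z, f) (w, b) :=
        P.R_rot.1 (htS (RoundModel.sh 1 (z, f)) hz (P.R_rot.2 hf))
      have := hzT _ hz hfw
      constructor
      · intro h
        obtain ⟨f', hf'⟩ := P.exists_R (z, f) h
        exact P.rel ((this (u, f') hu).1 hf')
      · intro h
        obtain ⟨f', hf'⟩ := P.exists_R (v, a) h
        exact P.rel ((this (u, f') hu).2 hf')
    exact hnd fun u hu h => (key z' hz' htz' u hu).2 ((key z hz htz u hu).1 h)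
  · -- the traces of `w2` and `w` are aligned after one turn
    have hb1 : P.pos (w2, b2 + 1) = P.pos (w2, b2) + P.n := by
      rw [hpos']; ring
    have hST : ∀ u ∈ K, M w u → M v u := by
      intro u hu h
      obtain ⟨f, hf⟩ := P.exists_R (w, b) h
      have hf' := (hb' (u, f) hu).1 hf
      have i1 := P.R_lt hf'
      have i2 := P.R_lt' hf
      rw [hb1] at i1
      refine P.rel (hmid (RoundModel.sh (-1) (u, f)) hu ?_ ?_)
      · rw [P.pos_sh]; linarith
      · rw [P.pos_sh]; linarith
    obtain ⟨f, hf1, hf2⟩ := P.exists_lift k (P.pos (w2, b2))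
    have hfw : P.pos (w, b) ≤ P.pos (k, f) := by
      by_contra hcon
      have := hmid (k, f) hk hf1 (not_le.1 hcon).le
      exact P.irrefl k (hd k hk (P.rel this))
    have hkS : ∀ u ∈ K, M k u → M w u := by
      intro u hu h
      obtain ⟨f', hf'⟩ := P.exists_R (k, f) h
      rcases P.between hfw (by rw [hb1]; exact hf2.le) hg0 hg0' hf' with h | h
      · exact P.rel h
      · exact (hww u hu).2 (P.rel h)
    exact P.irrefl l (hdl l hl (hkS l hl hkl))

/-- When the core is a circulant with `2 * c < m`, the twist does not change any neighbourhood. -/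
theorem twist_trivial [Finite V] (P : RoundModel M) (T : Twist M τ) {r : V → V} (hK : IsCore M τ K r)
    (hst : ∀ u ∈ K, ∀ v ∈ K, Dom M K u v → Dom M K v u)
    {m : ℕ} {c : ℤ} {L : ℤ → V × ℤ} (hE : IsCircEnum P K m c L) (hmc : 2 * c < m) (v w : V) :
    M v w ↔ M (τ v) w := by
  have hnb : ∀ u ∈ K, ∃ z ∈ K, ∃ z' ∈ K, M u z ∧ M u z' ∧ ¬ Dom M K z z' :=
    fun u hu => hE.two_nbrs hmc hst hu
  have hne := hE.trace_nonempty hmc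
  have hfix : ∀ u ∈ K, Dom M K (τ u) u := fun u hu => hE.core_fixed T hmc hst hK.inv hu
  have hrK : ∀ v, r v ∈ K := fun v => by
    obtain ⟨w, -, h⟩ := hne v
    exact hK.mem v w h
  have hdτ : ∀ v, Dom M K (τ v) (r v) := fun v u hu h =>
    hfix _ (hrK v) u hu ((hK.dom v).tau T hK.inv u hu h)
  have hcore : ∀ v, ∀ u ∈ K, M v u ↔ M (τ v) u := by
    intro v u hu
    by_contra hcon
    have hS : ∀ w, τ w ∈ {w | w ∈ K ∧ Dom M K w u} ↔ w ∈ {w | w ∈ K ∧ Dom M K w u} := by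
      intro w
      simp only [Set.mem_ofPred_eq, hK.inv]
      refine and_congr_right fun hw => ⟨fun h x hx hwx => ?_, fun h x hx hwx => ?_⟩
      · exact h x hx (hst _ ((hK.inv w).2 hw) _ hw (hfix w hw) x hx hwx)
      · exact h x hx (hfix w hw x hx hwx)
    obtain ⟨⟨w2, ⟨hw2, hw2u⟩, h2, h4⟩, w, ⟨hw, hwu⟩, h1, h3⟩ :=
      T.exists_swap hS (w0 := u) ⟨hu, fun _ _ h => h⟩ hcon
    exact no_swap_core P hst hnb (hrK v) (hK.dom v) (hdτ v) hw hw2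
      (fun x hx h => hst _ hw2 _ hu hw2u x hx (hwu x hx h)) h2 h4 h1 h3
  by_contra hcon
  have hS : ∀ x, τ x ∈ {x | ∀ u ∈ K, M x u ↔ M w u} ↔ x ∈ {x | ∀ u ∈ K, M x u ↔ M w u} := by
    intro x
    simp only [Set.mem_ofPred_eq]
    exact forall₂_congr fun u hu => by rw [hcore x u hu]
  obtain ⟨⟨w2, hw2, h2, h4⟩, w1, hw1, h1, h3⟩ :=
    T.exists_swap hS (w0 := w) (fun _ _ => Iff.rfl) hcon
  have hww : ∀ u ∈ K, M w1 u ↔ M w2 u := fun u hu => (hw1 u hu).trans (hw2 u hu).symm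
  exact no_swap P hnb hne (hrK v) (hK.dom v) (hrK w2)
    (fun u hu h => hK.dom w2 u hu ((hww u hu).1 h)) (hK.hom _ _ h2) (hcore v) hww h2 h4 h1 h3

/-- The relations `M` and `M (τ ·) ·` are isomorphic. -/
theorem exists_iso [Finite V] (P : RoundModel M) (T : Twist M τ) :
    ∃ f : V ≃ V, ∀ u v, M (τ u) v ↔ M (f u) (f v) := by
  obtain ⟨K, r, hK, hst⟩ := exists_core T
  have hcol : (∀ u ∈ K, ∀ z ∈ K, ∀ z' ∈ K, M u z → M u z' → Dom M K z z') →
      ∃ f : V ≃ V, ∀ u v, M (τ u) v ↔ M (f u) (f v) := by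
    intro hL
    obtain ⟨χ, h1, h2⟩ := exists_coloring T hK hL
    exact exists_iso_of_coloring T χ h1 h2
  rcases K.eq_empty_or_nonempty with rfl | hne
  · exact hcol fun u hu => hu.elim
  obtain ⟨m, c, L, hE⟩ := exists_circEnum P hne hK.nonisol hst
  rcases hE.two_le.eq_or_lt with hmc | hmc
  · exact hcol (hE.nbr_dom hmc hst)
  · exact ⟨Equiv.refl V, fun u v => (twist_trivial P T hK hst hE hmc u v).symm⟩

end Propagation

/-! ### The round model of a proper circular-arc graph -/

theorem mem_closedNbhd_comm {V : Type*} (G : SimpleGraph V) {u v : V} :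
    u ∈ ClosedNbhd G v ↔ v ∈ ClosedNbhd G u := by
  simp only [ClosedNbhd, Set.mem_ofPred_eq, G.adj_comm u v, eq_comm (a := u)]

/-- Unrolling the circle, an arc starting at `a` with `k` points becomes `[y, y + k - 1]` for an
integer `y` representing `a`; incomparability of the arcs gives the monotonicity of the endpoints.
-/
theorem exists_roundModel {V : Type*} (G : SimpleGraph V) (hG : IsPCAGraph G) :
    Nonempty (RoundModel fun u v => u ∉ ClosedNbhd G v) := by
  obtain ⟨n, hn, l, -, harc, hinc, hadj⟩ := hG
  have : NeZero n := ⟨hn.ne'⟩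
  have hnZ : (0 : ℤ) < n := by exact_mod_cast hn
  have hinter : ∀ v, ∃ s e : ℤ, s ≤ e ∧
      ∀ p, p ∈ l v ↔ ∃ x : ℤ, s ≤ x ∧ x ≤ e ∧ (x : ZMod n) = p := by
    intro v
    obtain ⟨hne, a, k, -, hl⟩ := harc v
    obtain ⟨y, -, -, rfl⟩ := exists_intCast a
    have hmem : ∀ p, p ∈ l v ↔ ∃ x : ℤ, y ≤ x ∧ x ≤ y + k - 1 ∧ (x : ZMod n) = p := by
      intro p
      rw [hl]
      constructor
      · rintro ⟨i, hi, rfl⟩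
        exact ⟨y + i, by omega, by omega, by push_cast; rfl⟩
      · rintro ⟨x, h1, h2, rfl⟩
        refine ⟨(x - y).toNat, by omega, ?_⟩
        have : (((x - y).toNat : ℤ) : ZMod n) = ((x - y : ℤ) : ZMod n) := by
          rw [Int.toNat_of_nonneg (by omega)]
        rw [Int.cast_natCast] at this
        rw [this]; push_cast; ring
    refine ⟨y, y + k - 1, ?_, hmem⟩
    obtain ⟨p, hp⟩ := hne
    obtain ⟨x, h1, h2, -⟩ := (hmem p).1 hp
    linarith
  choose s e hse hmem using hinter
  have hcast : ∀ x k : ℤ, ((x + k * n : ℤ) : ZMod n) = x := fun x k => by push_cast; simp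
  refine ⟨{ n := n, s := s, e := e, npos := hnZ, le := hse, mono := ?_, rel_iff := ?_ }⟩
  · intro u v k h
    by_contra hcon
    rw [not_le] at hcon
    by_cases huv : u = v
    · subst huv
      linarith
    · refine hinc v u (Ne.symm huv) fun p hp => ?_
      obtain ⟨x, h1, h2, h3⟩ := (hmem v p).1 hp
      exact (hmem u p).2 ⟨x + k * n, by linarith, by linarith, by rw [hcast, h3]⟩
  · intro u v
    by_cases huv : u = v
    · subst huv
      constructor
      · intro h
        exact absurd (Or.inl rfl) h
      · rintro ⟨k, h1, h2⟩
        have := hse u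
        have hk : 0 < k := by
          by_contra hcon
          nlinarith
        nlinarith
    have hM : u ∉ ClosedNbhd G v ↔ ¬ (l u ∩ l v).Nonempty := by
      rw [← hadj u v huv]
      simp [ClosedNbhd, huv]
    rw [hM]
    constructor
    · intro h
      have hmod1 := Int.emod_nonneg (s v - s u) hnZ.ne'
      have hmod2 := Int.emod_lt_of_pos (s v - s u) hnZ
      have hmod3 := Int.mul_ediv_add_emod (s v - s u) n
      set q := (s v - s u) / n
      set ρ := (s v - s u) % n
      have hs : s v + (-q) * n = s u + ρ := by linarith
      refine ⟨-q, ?_, ?_⟩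
      · by_contra hcon
        refine h ⟨(s v : ZMod n), (hmem _ _).2 ⟨s v + (-q) * n, by linarith, by linarith, hcast _ _⟩,
          (hmem _ _).2 ⟨s v, le_rfl, hse v, rfl⟩⟩
      · by_contra hcon
        refine h ⟨(s u : ZMod n), (hmem _ _).2 ⟨s u, le_rfl, hse u, rfl⟩,
          (hmem _ _).2 ⟨s u + (1 + q) * n, by linarith, by linarith, hcast _ _⟩⟩
    · rintro ⟨k, h1, h2⟩ ⟨p, hpu, hpv⟩
      obtain ⟨x, hx1, hx2, hx⟩ := (hmem _ _).1 hpu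
      obtain ⟨y, hy1, hy2, hy⟩ := (hmem _ _).1 hpv
      rw [← hy, ZMod.intCast_eq_intCast_iff_dvd_sub] at hx
      obtain ⟨j, hj⟩ := hx
      have hjk : 0 < j + k := by
        by_contra hcon
        nlinarith
      nlinarith

end PCARec

/-- A proper circular-arc graph is reconstructible up to isomorphism
from its closed neighborhood hypergraph: if `N[G] ≅ N[H]` as hypergraphs with
multiplicities (witnessed by bijections `φ`, `ψ` with `φ(N_G[v]) = N_H[ψ(v)]`), then
`G ≅ H`. -/
theorem stmt19 {V W : Type*} [Fintype V] [Fintype W]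
    (G : SimpleGraph V) (H : SimpleGraph W) (hG : IsPCAGraph G)
    (φ ψ : V ≃ W)
    (h : ∀ v, (fun x => φ x) '' ClosedNbhd G v = ClosedNbhd H (ψ v)) :
    Nonempty (G ≃g H) := by
  -- pulled back along `ψ`, the closed neighbourhoods of `H` are those of `G` twisted by `φ⁻¹ ∘ ψ`
  have hmem : ∀ u v, ψ u ∈ ClosedNbhd H (ψ v) ↔ (ψ.trans φ.symm) u ∈ ClosedNbhd G v := by
    intro u v
    rw [← h v]
    constructor
    · rintro ⟨x, hx, hxu⟩
      have : x = φ.symm (ψ u) := by rw [← hxu]; simp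
      simpa [← this] using hx
    · intro hx
      exact ⟨_, hx, by simp⟩
  obtain ⟨P⟩ := PCARec.exists_roundModel G hG
  have T : PCARec.Twist (fun u v => u ∉ ClosedNbhd G v) (ψ.trans φ.symm) :=
    { symm := fun u v => P.symm
      irrefl := P.irrefl
      twist := fun u v => by
        rw [← hmem, PCARec.mem_closedNbhd_comm, hmem, PCARec.mem_closedNbhd_comm]
      irrefl' := fun u => by
        rw [← hmem, not_not]
        exact Or.inl rfl }
  obtain ⟨f, hf⟩ := PCARec.exists_iso P T
  refine ⟨⟨f.symm.trans ψ, fun {a b} => ?_⟩⟩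
  obtain ⟨u, rfl⟩ := f.surjective a
  obtain ⟨v, rfl⟩ := f.surjective b
  have key := hf u v
  rw [← hmem, not_iff_not] at key
  simp only [Equiv.trans_apply, Equiv.symm_apply_apply]
  by_cases huv : u = v
  · subst huv
    simp
  · simpa [ClosedNbhd, huv] using key
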